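/- Let F be a finite field with algebraic closure F̄ and let G be a finite group. Let V and V' be finite-dimensional F-vector spaces with representations of G such that V and V' have the same multiset of composition factors (with multiplicities) as F[G]-modules. Assume that every composition factor of the F̄[G]-module V ⊗_F F̄ which admits a nonzero G-invariant quadratic form has even dimension over F̄. Then for any nondegenerate G-invariant quadratic forms Q on V and Q' on V', the quadratic spaces (V, Q) and (V', Q') are isometric: there is an F-linear isomorphism φ : V → V' with Q'(φ(x)) = Q(x) for all x ∈ V. -/

import Mathlib

open QuadraticMap

/-- A chain of invariant subspaces for a family of linear endomorphisms indexed by a group. -/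
structure GSeries (K : Type*) {G V : Type*} [Field K] [Group G]
    [AddCommGroup V] [Module K V] (π : G → V →ₗ[K] V) (n : ℕ) where
  s : Fin (n + 1) → Submodule K V
  mono : Monotone s
  inv : ∀ (i : Fin (n + 1)) (g : G), ∀ x ∈ s i, π g x ∈ s i
  bot : s 0 = ⊥
  top : s (Fin.last n) = ⊤

namespace GSeries

variable {K G V : Type*} [Field K] [Group G] [AddCommGroup V] [Module K V]
  {π : G → V →ₗ[K] V} {n : ℕ}

/-- The `i`-th subquotient of the series. -/
abbrev factor (c : GSeries K π n) (i : Fin n) : Type _ :=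
  ↥(c.s i.succ) ⧸ Submodule.comap (c.s i.succ).subtype (c.s i.castSucc)

/-- The induced action of `g : G` on the `i`-th subquotient. -/
noncomputable def act (c : GSeries K π n) (i : Fin n) (g : G) :
    c.factor i →ₗ[K] c.factor i :=
  Submodule.mapQ _ _ ((π g).restrict (c.inv i.succ g)) (by
    intro x hx
    simp only [Submodule.mem_comap, Submodule.subtype_apply, LinearMap.restrict_apply] at hx ⊢
    exact c.inv i.castSucc g _ hx)

/-- The `i`-th subquotient is a simple `K[G]`-module. -/
def SimpleAt (c : GSeries K π n) (i : Fin n) : Prop :=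
  Nontrivial (c.factor i) ∧
    ∀ W : Submodule K (c.factor i), (∀ g, ∀ x ∈ W, c.act i g x ∈ W) → W = ⊥ ∨ W = ⊤

/-- The series is a composition series: all the subquotients are simple. -/
def IsCompositionSeries (c : GSeries K π n) : Prop := ∀ i, c.SimpleAt i

/-- The `i`-th factor of `c` and the `j`-th factor of `c'` are isomorphic as
`K`-linear `G`-modules. -/
def FactorEquiv {V' : Type*} [AddCommGroup V'] [Module K V'] {π' : G → V' →ₗ[K] V'}
    (c : GSeries K π n) (i : Fin n) (c' : GSeries K π' n) (j : Fin n) : Prop :=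
  ∃ e : c.factor i ≃ₗ[K] c'.factor j, ∀ g x, e (c.act i g x) = c'.act j g (e x)

end GSeries

/-!
Put `M = V × V'` with the form `Q ⊥ -Q'`. Since `V` and `V'` have the same composition factors,
every simple module occurs in `M` with even multiplicity. This makes `M` metabolic, by induction on
the dimension: a totally singular simple submodule `T` reduces `M` to `T^⊥ / T`, and otherwise
`M` splits off simple submodules, isomorphic ones in pairs. A pair is metabolic provided any two
nondegenerate invariant forms `q₁`, `q₂` on a simple module `S` are anti-isometric. Given a
Lagrangian in `V × V'`, its intersection with `V` is made smaller by passing to a Kneser neighbour,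
until the Lagrangian is the graph of an isometry.

For the anti-isometry, `k = End_G(S)` is a finite field with an involution `σ`, taking adjoints for
`q₁`, and `q₂` has polar form `b₁(a x, y)` for some `a ∈ k` fixed by `σ`. A solution `c` of
`c * σ c = -a⁻¹` is an anti-isometry. It exists in characteristic two, where `c` is a square root,
and when `σ ≠ 1`, because norms of finite fields are surjective. In the remaining case the polar
form of `q₁` is the transfer of a symmetric `k`-bilinear form on `S`, whose scalar extension to an
algebraically closed field has composition factors which either pair off or carry an invariant
quadratic form, hence have even dimension. So `dim_k S` is even, and a form of even dimension over a
finite field has similitudes with every multiplier.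
-/

namespace InvariantForm

section Multiplicity

variable {R M N P : Type*} [Ring R] [AddCommGroup M] [Module R M] [AddCommGroup N] [Module R N]
  [AddCommGroup P] [Module R P] (S : Type*) [AddCommGroup S] [Module R S]

/-- The subquotient `B / (A ∩ B)` attached to two submodules `A`, `B`; it is `B / A` when
`A ≤ B`. -/
abbrev Subquotient (A B : Submodule R M) : Type _ := B ⧸ A.comap B.subtype

open Classical in
/-- The number of factors of a composition series that are isomorphic to `S`. -/
noncomputable def factorCount (c : CompositionSeries (Submodule R M)) : ℕ :=
  ∑ i : Fin c.length, if Nonempty (Subquotient (c i.castSucc) (c i.succ) ≃ₗ[R] S) then 1 else 0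

variable (R M) in
/-- The multiplicity of the simple module `S` as a composition factor of `M`, with value `0` if
`M` has no composition series. By Jordan–Hölder the infimum is over at most one number. -/
noncomputable def simpleMultiplicity : ℕ :=
  sInf {m | ∃ c : CompositionSeries (Submodule R M),
    c.head = ⊥ ∧ c.last = ⊤ ∧ factorCount S c = m}

variable {S} in
theorem nonempty_linearEquiv_congr_left (e : M ≃ₗ[R] N) :
    Nonempty (M ≃ₗ[R] S) ↔ Nonempty (N ≃ₗ[R] S) :=
  ⟨fun ⟨f⟩ => ⟨e.symm.trans f⟩, fun ⟨f⟩ => ⟨e.trans f⟩⟩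

open Classical in
theorem simpleMultiplicity_eq_factorCount (c : CompositionSeries (Submodule R M))
    (hbot : c.head = ⊥) (htop : c.last = ⊤) : simpleMultiplicity R M S = factorCount S c := by
  suffices h : {m | ∃ c : CompositionSeries (Submodule R M),
      c.head = ⊥ ∧ c.last = ⊤ ∧ factorCount S c = m} = {factorCount S c} by
    rw [simpleMultiplicity, h, csInf_singleton]
  refine Set.eq_singleton_iff_unique_mem.2 ⟨⟨c, hbot, htop, rfl⟩, ?_⟩
  rintro _ ⟨d, hd, hd', rfl⟩
  obtain ⟨f, hf⟩ := d.jordan_holder c (hd.trans hbot.symm) (hd'.trans htop.symm)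
  rw [factorCount, factorCount, ← Equiv.sum_comp f]
  exact Finset.sum_congr rfl fun i _ =>
    if_congr (nonempty_linearEquiv_congr_left (hf i).linearEquiv) rfl rfl

open Classical in
theorem factorCount_smash (c d : CompositionSeries (Submodule R M)) (h : c.last = d.head) :
    factorCount S (c.smash d h) = factorCount S c + factorCount S d := by
  refine (Fin.sum_univ_add (a := c.length) (b := d.length) _).trans (congrArg₂ _ ?_ ?_)
  · refine Finset.sum_congr rfl fun i _ => ?_
    erw [RelSeries.smash_castAdd h i, RelSeries.smash_succ_castAdd h i]
  · refine Finset.sum_congr rfl fun i _ => ?_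
    erw [RelSeries.smash_natAdd h i, RelSeries.smash_succ_natAdd h i]

open Classical in
theorem factorCount_map (c : CompositionSeries (Submodule R M))
    {Φ : Submodule R M → Submodule R N} (hcov : ∀ {A B}, A ⋖ B → Φ A ⋖ Φ B)
    (hΦ : ∀ A B, Nonempty (Subquotient A B ≃ₗ[R] Subquotient (Φ A) (Φ B))) :
    factorCount S (c.map ⟨Φ, hcov⟩ : CompositionSeries (Submodule R N)) = factorCount S c :=
  Finset.sum_congr rfl fun _ _ =>
    if_congr (nonempty_linearEquiv_congr_left (hΦ _ _).some).symm rfl rfl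

theorem nonempty_subquotient_equiv {A B : Submodule R M} {A' B' : Submodule R N} (f : M →ₗ[R] N)
    (hB : B.map f = B') (hA : ∀ x ∈ B, f x ∈ A' ↔ x ∈ A) :
    Nonempty (Subquotient A B ≃ₗ[R] Subquotient A' B') := by
  subst hB
  let g : B →ₗ[R] Subquotient A' (B.map f) := (Submodule.mkQ _).comp (f.submoduleMap B)
  have hg : Function.Surjective g :=
    (Submodule.mkQ_surjective _).comp (f.submoduleMap_surjective B)
  have hker : g.ker = A.comap B.subtype := by
    ext ⟨x, hx⟩
    simp [g, hA x hx]
  exact ⟨(Submodule.quotEquivOfEq _ _ hker.symm).trans (g.quotKerEquivOfSurjective hg)⟩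

theorem simpleMultiplicity_eq_add_of_exact [IsNoetherian R N] [IsArtinian R N]
    {f : M →ₗ[R] N} {g : N →ₗ[R] P} (hf : Function.Injective f) (hg : Function.Surjective g)
    (H : Function.Exact f g) :
    simpleMultiplicity R N S = simpleMultiplicity R M S + simpleMultiplicity R P S := by
  have := isNoetherian_of_injective f hf
  have := isArtinian_of_injective f hf
  have := isNoetherian_of_surjective g (LinearMap.range_eq_top.2 hg)
  have := isArtinian_of_surjective N g hg
  obtain ⟨c, hc, hc'⟩ := exists_compositionSeries_of_isNoetherian_isArtinian R M
  obtain ⟨d, hd, hd'⟩ := exists_compositionSeries_of_isNoetherian_isArtinian R P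
  let c₁ : CompositionSeries (Submodule R N) :=
    c.map ⟨Submodule.map f, Submodule.map_covBy_of_injective hf⟩
  let d₁ : CompositionSeries (Submodule R N) :=
    d.map ⟨Submodule.comap g, Submodule.comap_covBy_of_surjective hg⟩
  have hc₁ : c₁.last = f.range := by
    rw [← Submodule.map_top, ← hc']
    rfl
  have hd₁ : d₁.head = g.ker := by
    rw [← Submodule.comap_bot, ← hd]
    rfl
  have hcount : factorCount S c₁ = factorCount S c := factorCount_map S c _ fun _ _ =>
    nonempty_subquotient_equiv f rfl fun x _ => hf.mem_set_image
  have hcount' : factorCount S d₁ = factorCount S d := factorCount_map S d _ fun _ B =>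
    ⟨(nonempty_subquotient_equiv g (Submodule.map_comap_eq_of_surjective hg B)
      fun _ _ => Iff.rfl).some.symm⟩
  have hconn : c₁.last = d₁.head := by rw [hc₁, hd₁, LinearMap.exact_iff.1 H]
  rw [simpleMultiplicity_eq_factorCount S (c₁.smash d₁ hconn)
      (by simpa [c₁, hc, -Submodule.map_bot] using Submodule.map_bot f)
      (by simpa [d₁, hd', -Submodule.comap_top] using Submodule.comap_top g),
    factorCount_smash, hcount, hcount', simpleMultiplicity_eq_factorCount S c hc hc',
    simpleMultiplicity_eq_factorCount S d hd hd']

theorem simpleMultiplicity_of_subsingleton [Subsingleton M] : simpleMultiplicity R M S = 0 :=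
  simpleMultiplicity_eq_factorCount S (RelSeries.singleton _ ⊥) rfl (Subsingleton.elim _ _)

theorem simpleMultiplicity_congr [IsNoetherian R N] [IsArtinian R N] (e : M ≃ₗ[R] N) :
    simpleMultiplicity R M S = simpleMultiplicity R N S := by
  have h := simpleMultiplicity_eq_add_of_exact S (g := (0 : N →ₗ[R] PUnit))
    e.injective (fun x => ⟨0, Subsingleton.elim _ x⟩) (fun x => iff_of_true rfl (e.surjective x))
  rw [h, simpleMultiplicity_of_subsingleton (M := PUnit) S, add_zero]

theorem simpleMultiplicity_eq_add_quotient [IsNoetherian R M] [IsArtinian R M]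
    (A : Submodule R M) :
    simpleMultiplicity R M S = simpleMultiplicity R A S + simpleMultiplicity R (M ⧸ A) S :=
  simpleMultiplicity_eq_add_of_exact S A.injective_subtype A.mkQ_surjective
    (LinearMap.exact_subtype_mkQ A)

theorem simpleMultiplicity_prod [IsNoetherian R M] [IsArtinian R M] [IsNoetherian R N]
    [IsArtinian R N] :
    simpleMultiplicity R (M × N) S = simpleMultiplicity R M S + simpleMultiplicity R N S :=
  simpleMultiplicity_eq_add_of_exact S LinearMap.inl_injective LinearMap.snd_surjective
    Function.Exact.inl_snd

theorem simpleMultiplicity_eq_add_of_isCompl [IsNoetherian R M] [IsArtinian R M]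
    {A B : Submodule R M} (h : IsCompl A B) :
    simpleMultiplicity R M S = simpleMultiplicity R A S + simpleMultiplicity R B S := by
  rw [simpleMultiplicity_eq_add_quotient S A,
    simpleMultiplicity_congr S (Submodule.quotientEquivOfIsCompl A B h)]

theorem simpleMultiplicity_le_of_injective_of_surjective [IsNoetherian R M] [IsArtinian R M]
    {f : N →ₗ[R] M} {g : N →ₗ[R] P} (hf : Function.Injective f) (hg : Function.Surjective g) :
    simpleMultiplicity R P S ≤ simpleMultiplicity R M S := by
  have := isNoetherian_of_injective f hf
  have := isArtinian_of_injective f hf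
  rw [simpleMultiplicity_eq_add_of_exact S f.range.injective_subtype f.range.mkQ_surjective
      (LinearMap.exact_subtype_mkQ _), ← simpleMultiplicity_congr S (LinearEquiv.ofInjective f hf),
    simpleMultiplicity_eq_add_of_exact S g.ker.injective_subtype hg g.exact_subtype_ker_map]
  omega

open Classical in
theorem simpleMultiplicity_of_isSimpleModule [IsSimpleModule R M] :
    simpleMultiplicity R M S = if Nonempty (M ≃ₗ[R] S) then 1 else 0 := by
  let c : CompositionSeries (Submodule R M) := (RelSeries.singleton _ ⊥).snoc ⊤ bot_covBy_top
  have e : Nonempty (Subquotient (⊥ : Submodule R M) ⊤ ≃ₗ[R] M) :=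
    ⟨(Submodule.quotEquivOfEqBot _ (by simp)).trans Submodule.topEquiv⟩
  rw [simpleMultiplicity_eq_factorCount S c rfl rfl]
  exact (Fin.sum_univ_one _).trans
    (if_congr (nonempty_linearEquiv_congr_left e.some) rfl rfl)

theorem exists_compositionSeries_of_simpleMultiplicity_ne_zero
    (h : simpleMultiplicity R M S ≠ 0) :
    ∃ c : CompositionSeries (Submodule R M), c.head = ⊥ ∧ c.last = ⊤ ∧
      ∃ i : Fin c.length, Nonempty (Subquotient (c i.castSucc) (c i.succ) ≃ₗ[R] S) := by
  obtain ⟨c, hc, hc', hn⟩ := Nat.sInf_mem (Nat.nonempty_of_pos_sInf (Nat.pos_of_ne_zero h))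
  rw [simpleMultiplicity, ← hn] at h
  obtain ⟨i, -, hi⟩ := Finset.exists_ne_zero_of_sum_ne_zero h
  exact ⟨c, hc, hc', i, by_contra fun hS => hi (if_neg hS)⟩

theorem simpleMultiplicity_ne_zero_of_surjective [IsNoetherian R M] [IsArtinian R M]
    [IsSimpleModule R S] (A : Submodule R M) (f : A →ₗ[R] S) (hf : Function.Surjective f) :
    simpleMultiplicity R M S ≠ 0 := by
  rw [simpleMultiplicity_eq_add_quotient S A,
    simpleMultiplicity_eq_add_of_exact S f.ker.injective_subtype hf f.exact_subtype_ker_map,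
    simpleMultiplicity_of_isSimpleModule (M := S), if_pos ⟨LinearEquiv.refl R S⟩]
  omega

theorem exists_surjective_of_simpleMultiplicity_ne_zero (h : simpleMultiplicity R M S ≠ 0) :
    ∃ (B : Submodule R M) (p : B →ₗ[R] S), Function.Surjective p := by
  obtain ⟨c, -, -, i, ⟨e⟩⟩ := exists_compositionSeries_of_simpleMultiplicity_ne_zero S h
  exact ⟨c i.succ, e.toLinearMap ∘ₗ ((c i.castSucc).comap (c i.succ).subtype).mkQ,
    e.surjective.comp (Submodule.mkQ_surjective _)⟩

end Multiplicity

open scoped MonoidAlgebra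

section InvariantForms

open MonoidAlgebra (of)

variable {K G M N : Type*} [Group G]

section CommRing

variable [CommRing K] [AddCommGroup M] [Module K[G] M]

theorem of_smul_of_inv_smul (g : G) (x : M) : of K G g • of K G g⁻¹ • x = x := by
  rw [smul_smul, ← map_mul, mul_inv_cancel, map_one, one_smul]

variable [Module K M] [AddCommGroup N] [Module K N] [Module K[G] N]

variable (G) in
/-- Invariance of a quadratic form on a `K[G]`-module under the action of `G`. -/
def QuadInvariant (Q : QuadraticForm K M) : Prop := ∀ (g : G) (x : M), Q (of K G g • x) = Q x

variable (G) in
/-- Invariance of a bilinear form on a `K[G]`-module under the diagonal action of `G`. -/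
def BilinInvariant (B : LinearMap.BilinForm K M) : Prop :=
  ∀ (g : G) (x y : M), B (of K G g • x) (of K G g • y) = B x y

theorem QuadInvariant.polarBilin {Q : QuadraticForm K M} (hQ : QuadInvariant G Q) :
    BilinInvariant G (polarBilin Q) := fun g x y => by
  simp only [polarBilin_apply_apply, polar, ← smul_add, hQ g]

theorem BilinInvariant.apply_of_smul_left {B : LinearMap.BilinForm K M}
    (hB : BilinInvariant G B) (g : G) (x y : M) :
    B (of K G g • x) y = B x (of K G g⁻¹ • y) := by
  rw [← hB g x, of_smul_of_inv_smul]

theorem QuadInvariant.comp [IsScalarTower K K[G] M] [IsScalarTower K K[G] N]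
    {Q : QuadraticForm K N} (hQ : QuadInvariant G Q) (f : M →ₗ[K[G]] N) :
    QuadInvariant G (Q.comp (f.restrictScalars K)) := fun g x => by
  rw [QuadraticMap.comp_apply, LinearMap.restrictScalars_apply, map_smul, hQ]
  rfl

/-- The orthogonal complement of a submodule, as a `K[G]`-submodule. -/
noncomputable def BilinInvariant.orthogonal [IsScalarTower K K[G] M]
    {B : LinearMap.BilinForm K M} (hB : BilinInvariant G B) (A : Submodule K[G] M) :
    Submodule K[G] M :=
  MonoidAlgebra.submoduleOfSMulMem (B.orthogonal (A.restrictScalars K)) fun g x hx y hy => by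
    have h := hx _ (A.smul_mem (of K G g⁻¹) hy)
    rwa [← hB g, of_smul_of_inv_smul] at h

theorem isSymm_polarBilin (Q : QuadraticForm K M) :
    LinearMap.BilinForm.IsSymm (polarBilin Q) :=
  ⟨fun x y => polar_comm Q x y⟩

theorem nondegenerate_polarBilin_iff {Q : QuadraticForm K M} :
    (polarBilin Q).Nondegenerate ↔ ∀ x, (∀ y, polar Q x y = 0) → x = 0 :=
  (isSymm_polarBilin Q).isRefl.nondegenerate_iff_separatingLeft

end CommRing

namespace BilinInvariant

variable [Field K] [AddCommGroup M] [Module K M] [Module K[G] M] [IsScalarTower K K[G] M]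
  [FiniteDimensional K M] {B : LinearMap.BilinForm K M} (hB : BilinInvariant G B)

theorem finrank_add_finrank_orthogonal (hnd : B.Nondegenerate) (A : Submodule K[G] M) :
    Module.finrank K A + Module.finrank K (hB.orthogonal A) = Module.finrank K M := by
  have h := LinearMap.BilinForm.finrank_orthogonal hnd (A.restrictScalars K)
  have hle := (A.restrictScalars K).finrank_le
  change Module.finrank K (hB.orthogonal A) = Module.finrank K M - Module.finrank K A at h
  change Module.finrank K A ≤ Module.finrank K M at hle
  omega

theorem orthogonal_orthogonal (hs : B.IsRefl) (hnd : B.Nondegenerate) (A : Submodule K[G] M) :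
    hB.orthogonal (hB.orthogonal A) = A :=
  Submodule.restrictScalars_injective K _ _
    (LinearMap.BilinForm.orthogonal_orthogonal hnd hs (A.restrictScalars K))

theorem isCompl_orthogonal (hs : B.IsRefl) {A : Submodule K[G] M}
    (hA : Disjoint A (hB.orthogonal A)) : IsCompl A (hB.orthogonal A) := by
  have hdisj : Disjoint (A.restrictScalars K) (B.orthogonal (A.restrictScalars K)) :=
    Submodule.disjoint_def.2 fun x => Submodule.disjoint_def.1 hA x
  exact (Submodule.isCompl_restrictScalars_iff K).1
    ((LinearMap.BilinForm.isCompl_orthogonal_iff_disjoint hs).2 hdisj)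

include hB in
theorem exists_adjoint (hnd : B.Nondegenerate) [AddCommGroup N] [Module K N] [Module K[G] N]
    [IsScalarTower K K[G] N] {C : LinearMap.BilinForm K N} (hC : BilinInvariant G C)
    (p : M →ₗ[K[G]] N) : ∃ p' : N →ₗ[K[G]] M, ∀ y x, B (p' y) x = C y (p x) := by
  let f : N →ₗ[K] M := (B.toDual hnd).symm ∘ₗ C.compl₂ (p.restrictScalars K)
  have hf (y x) : B (f y) x = C y (p x) :=
    LinearMap.BilinForm.apply_toDual_symm_apply (hB := hnd) _ _
  refine ⟨MonoidAlgebra.equivariantOfLinearOfComm f fun g y => ?_, hf⟩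
  refine sub_eq_zero.1 (hnd.1 _ fun x => ?_)
  have hgB := hB.apply_of_smul_left g (f y) x
  have hgC := hC.apply_of_smul_left g y (p x)
  rw [MonoidAlgebra.of_apply] at hgB hgC
  rw [map_sub, LinearMap.sub_apply, hf, hgB, hf, p.map_smul, hgC, sub_self]

end BilinInvariant

end InvariantForms

section Reduction

open Module (finrank)

variable {K G M : Type*} [Field K] [Group G] [AddCommGroup M] [Module K M] [Module K[G] M]
  [IsScalarTower K K[G] M] {Q : QuadraticForm K M}

/-- The restriction of a quadratic form to a `K[G]`-submodule. -/
noncomputable abbrev restrictForm (Q : QuadraticForm K M) (A : Submodule K[G] M) :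
    QuadraticForm K A :=
  Q.comp (A.subtype.restrictScalars K)

theorem nondegenerate_restrictForm (hQ : QuadInvariant G Q) {A : Submodule K[G] M}
    (hA : Disjoint A (hQ.polarBilin.orthogonal A)) :
    (polarBilin (restrictForm Q A)).Nondegenerate := by
  refine nondegenerate_polarBilin_iff.2 fun x hx => Subtype.ext ?_
  refine Submodule.disjoint_def.1 hA x x.2 fun y hy => ?_
  rw [polarBilin_apply_apply, polar_comm]
  exact hx ⟨y, hy⟩

theorem nondegenerate_comp_of_injective (hQ : QuadInvariant G Q) {S : Type*} [AddCommGroup S]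
    [Module K S] [Module K[G] S] [IsScalarTower K K[G] S] {j : S →ₗ[K[G]] M}
    (hj : Function.Injective j) (hdisj : Disjoint j.range (hQ.polarBilin.orthogonal j.range)) :
    (polarBilin (Q.comp (j.restrictScalars K))).Nondegenerate := by
  refine nondegenerate_polarBilin_iff.2 fun x hx => (map_eq_zero_iff j hj).1 ?_
  refine Submodule.disjoint_def.1 hdisj (j x) ⟨x, rfl⟩ ?_
  rintro _ ⟨y, rfl⟩
  rw [polarBilin_apply_apply, polar_comm]
  simpa [polar] using hx y

theorem nondegenerate_restrictForm_orthogonal [FiniteDimensional K M] (hQ : QuadInvariant G Q)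
    (hnd : (polarBilin Q).Nondegenerate) {A : Submodule K[G] M}
    (hA : Disjoint A (hQ.polarBilin.orthogonal A)) :
    (polarBilin (restrictForm Q (hQ.polarBilin.orthogonal A))).Nondegenerate := by
  apply nondegenerate_restrictForm hQ
  rw [hQ.polarBilin.orthogonal_orthogonal (isSymm_polarBilin Q).isRefl hnd]
  exact hA.symm

theorem disjoint_or_le_orthogonal (hQ : QuadInvariant G Q) (T : Submodule K[G] M)
    [IsSimpleModule K[G] T] :
    Disjoint T (hQ.polarBilin.orthogonal T) ∨ T ≤ hQ.polarBilin.orthogonal T :=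
  have hT : IsAtom T := isSimpleModule_iff_isAtom.1 inferInstance
  or_iff_not_imp_left.2 hT.not_disjoint_iff_le.1

theorem le_orthogonal_of_forall_eq_zero (hQ : QuadInvariant G Q) {T : Submodule K[G] M}
    (hT : ∀ x ∈ T, Q x = 0) : T ≤ hQ.polarBilin.orthogonal T := fun x hx y hy => by
  simp [polar, hT x hx, hT y hy, hT _ (T.add_mem hy hx)]

/-- The quadratic form induced on the quotient by a `K[G]`-submodule of the radical. -/
noncomputable def quotientForm (Q : QuadraticForm K M) (N : Submodule K[G] M)
    (hN : N.restrictScalars K ≤ Q.radical) : QuadraticForm K (M ⧸ N) :=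
  (Q.lift _ hN).comp (Submodule.Quotient.restrictScalarsEquiv K N).symm.toLinearMap

theorem QuadInvariant.quotientForm (hQ : QuadInvariant G Q) (N : Submodule K[G] M)
    (hN : N.restrictScalars K ≤ Q.radical) : QuadInvariant G (quotientForm Q N hN) := by
  intro g y
  obtain ⟨x, rfl⟩ := N.mkQ_surjective y
  exact hQ g x

theorem nondegenerate_quotientForm (N : Submodule K[G] M)
    (hN : N.restrictScalars K ≤ Q.radical) (h : ∀ x, (∀ y, polar Q x y = 0) → x ∈ N) :
    (polarBilin (quotientForm Q N hN)).Nondegenerate := by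
  refine nondegenerate_polarBilin_iff.2 fun y hy => ?_
  obtain ⟨x, rfl⟩ := N.mkQ_surjective y
  exact (Submodule.Quotient.mk_eq_zero N).2 (h x fun z => hy (Submodule.Quotient.mk z))

theorem exists_form_orthogonal_quotient [FiniteDimensional K M] (hQ : QuadInvariant G Q)
    (hnd : (polarBilin Q).Nondegenerate) {T : Submodule K[G] M} (hT : ∀ x ∈ T, Q x = 0) :
    ∃ Q' : QuadraticForm K (Subquotient T (hQ.polarBilin.orthogonal T)),
      (∀ x, Q' (Submodule.Quotient.mk x) = Q x) ∧ QuadInvariant G Q' ∧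
        (polarBilin Q').Nondegenerate := by
  let P := hQ.polarBilin.orthogonal T
  have hrad : (T.comap P.subtype).restrictScalars K ≤ (restrictForm Q P).radical :=
    fun t ht => ⟨hT t ht, LinearMap.ext fun x => x.2 t ht⟩
  refine ⟨quotientForm _ _ hrad, fun x => rfl, (hQ.comp P.subtype).quotientForm _ hrad,
    nondegenerate_quotientForm _ hrad fun x hx => ?_⟩
  have hTT := hQ.polarBilin.orthogonal_orthogonal (isSymm_polarBilin Q).isRefl hnd T
  refine hTT.le fun y hy => ?_
  rw [polarBilin_apply_apply, polar_comm]
  exact hx ⟨y, hy⟩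

variable [FiniteDimensional K M]

instance finiteDimensional_submodule (A : Submodule K[G] M) : FiniteDimensional K A :=
  inferInstanceAs (FiniteDimensional K (A.restrictScalars K))

instance isNoetherian_of_finiteDimensional : IsNoetherian K[G] M :=
  isNoetherian_of_tower K inferInstance

instance isArtinian_of_finiteDimensional : IsArtinian K[G] M :=
  isArtinian_of_tower K inferInstance

theorem finrank_quotient_add_finrank_submodule (A : Submodule K[G] M) :
    finrank K (M ⧸ A) + finrank K A = finrank K M := by
  rw [← (A.restrictScalars K).finrank_quotient_add_finrank,
    (Submodule.Quotient.restrictScalarsEquiv K A).finrank_eq]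
  rfl

theorem finrank_subquotient_orthogonal (hQ : QuadInvariant G Q)
    (hnd : (polarBilin Q).Nondegenerate) {T : Submodule K[G] M}
    (hT : T ≤ hQ.polarBilin.orthogonal T) :
    finrank K (Subquotient T (hQ.polarBilin.orthogonal T)) + 2 * finrank K T = finrank K M := by
  have h₁ := hQ.polarBilin.finrank_add_finrank_orthogonal hnd T
  have h₂ : finrank K (Subquotient T (hQ.polarBilin.orthogonal T)) +
      finrank K (T.comap (hQ.polarBilin.orthogonal T).subtype) = _ :=
    finrank_quotient_add_finrank_submodule _
  have h₃ : finrank K (T.comap (hQ.polarBilin.orthogonal T).subtype) = finrank K T :=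
    ((Submodule.comapSubtypeEquivOfLe hT).restrictScalars K).finrank_eq
  omega

theorem finrank_add_finrank_of_isCompl {A B : Submodule K[G] M} (h : IsCompl A B) :
    finrank K A + finrank K B = finrank K M := by
  rw [← finrank_quotient_add_finrank_submodule (K := K) A, add_comm,
    ((Submodule.quotientEquivOfIsCompl A B h).restrictScalars K).finrank_eq]

theorem simpleMultiplicity_eq_add_subquotient (S : Type*) [AddCommGroup S] [Module K[G] S]
    {T P : Submodule K[G] M} (h : T ≤ P) :
    simpleMultiplicity K[G] M S = simpleMultiplicity K[G] T S +
      simpleMultiplicity K[G] (Subquotient T P) S + simpleMultiplicity K[G] (M ⧸ P) S := by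
  rw [simpleMultiplicity_eq_add_quotient S P,
    simpleMultiplicity_eq_add_quotient S (T.comap P.subtype),
    simpleMultiplicity_congr S (Submodule.comapSubtypeEquivOfLe h)]

theorem exists_isSimpleModule_le {N : Submodule K[G] M} (hN : N ≠ ⊥) :
    ∃ T ≤ N, IsSimpleModule K[G] T := by
  obtain ⟨T, hT, hTN⟩ := (eq_bot_or_exists_atom_le N).resolve_left hN
  exact ⟨T, hTN, isSimpleModule_iff_isAtom.2 hT⟩

end Reduction

section Duality

variable {K G M : Type*} [Field K] [Group G] [AddCommGroup M] [Module K M] [Module K[G] M]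
  [IsScalarTower K K[G] M] {B : LinearMap.BilinForm K M}

theorem BilinInvariant.orthogonal_anti (hB : BilinInvariant G B) {A A' : Submodule K[G] M}
    (h : A ≤ A') : hB.orthogonal A' ≤ hB.orthogonal A :=
  fun _ hx y hy => hx y (h hy)

section

variable [FiniteDimensional K M]

/-- Passage to the orthogonal complement of a nondegenerate reflexive invariant form, as a duality
of the lattice of `K[G]`-submodules. -/
noncomputable def BilinInvariant.orthogonalOrderIso (hB : BilinInvariant G B) (hs : B.IsRefl)
    (hnd : B.Nondegenerate) : Submodule K[G] M ≃o (Submodule K[G] M)ᵒᵈ where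
  toFun A := OrderDual.toDual (hB.orthogonal A)
  invFun A := hB.orthogonal (OrderDual.ofDual A)
  left_inv := hB.orthogonal_orthogonal hs hnd
  right_inv := hB.orthogonal_orthogonal hs hnd
  map_rel_iff' {A A'} := by
    refine ⟨fun h => ?_, hB.orthogonal_anti⟩
    rw [← hB.orthogonal_orthogonal hs hnd A, ← hB.orthogonal_orthogonal hs hnd A']
    exact hB.orthogonal_anti h

theorem BilinInvariant.isSimpleModule_quotient_orthogonal (hB : BilinInvariant G B)
    (hs : B.IsRefl) (hnd : B.Nondegenerate) (T : Submodule K[G] M) [IsSimpleModule K[G] T] :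
    IsSimpleModule K[G] (M ⧸ hB.orthogonal T) := by
  refine isSimpleModule_iff_isCoatom.2 (isAtom_dual_iff_isCoatom.1 ?_)
  exact ((hB.orthogonalOrderIso hs hnd).isAtom_iff T).2 (isSimpleModule_iff_isAtom.1 inferInstance)

end

variable {S : Type*} [AddCommGroup S] [Module K S] [Module K[G] S] [IsScalarTower K K[G] S]
  {C : LinearMap.BilinForm K S}

theorem BilinInvariant.nonempty_equiv_quotient_orthogonal [FiniteDimensional K S]
    (hB : BilinInvariant G B) (hs : B.IsSymm) (hC : BilinInvariant G C) (hCnd : C.Nondegenerate)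
    {T : Submodule K[G] M} [IsSimpleModule K[G] S] (e : T ≃ₗ[K[G]] S)
    (hT : hB.orthogonal T ≠ ⊤) : Nonempty ((M ⧸ hB.orthogonal T) ≃ₗ[K[G]] S) := by
  obtain ⟨p, hp⟩ := hC.exists_adjoint hCnd hB (T.subtype ∘ₗ e.symm.toLinearMap)
  have hker : p.ker = hB.orthogonal T := by
    ext x
    refine ⟨fun h y hy => ?_, fun h => hCnd.1 _ fun y => ?_⟩
    · simpa [LinearMap.mem_ker.1 h, hs.eq x y] using (hp x (e ⟨y, hy⟩)).symm
    · rw [hp, ← hs.eq]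
      exact h _ (e.symm y).2
  have hsurj : Function.Surjective p := p.surjective_or_eq_zero.resolve_right fun h =>
    hT (by rw [← hker, h, LinearMap.ker_zero])
  exact ⟨(Submodule.quotEquivOfEq _ _ hker.symm).trans (p.quotKerEquivOfSurjective hsurj)⟩

variable [FiniteDimensional K M]

theorem BilinInvariant.exists_injective_adjoint (hB : BilinInvariant G B) (hnd : B.Nondegenerate)
    (hC : BilinInvariant G C) (hCnd : C.Nondegenerate) {p : M →ₗ[K[G]] S}
    (hp : Function.Surjective p) :
    ∃ p' : S →ₗ[K[G]] M, Function.Injective p' ∧ ∀ y x, B (p' y) x = C y (p x) := by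
  obtain ⟨p', hp'⟩ := hB.exists_adjoint hnd hC p
  refine ⟨p', (injective_iff_map_eq_zero p').2 fun y hy => hCnd.1 y fun z => ?_, hp'⟩
  obtain ⟨x, rfl⟩ := hp z
  rw [← hp', hy, map_zero, LinearMap.zero_apply]

theorem BilinInvariant.nonempty_equiv_quotient_orthogonal_iff (hB : BilinInvariant G B)
    (hs : B.IsSymm) (hnd : B.Nondegenerate) (hC : BilinInvariant G C) (hCnd : C.Nondegenerate)
    [FiniteDimensional K S] (T : Submodule K[G] M) [IsSimpleModule K[G] T]
    [IsSimpleModule K[G] S] :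
    Nonempty ((M ⧸ hB.orthogonal T) ≃ₗ[K[G]] S) ↔ Nonempty (T ≃ₗ[K[G]] S) := by
  have := hB.isSimpleModule_quotient_orthogonal hs.isRefl hnd T
  refine ⟨fun ⟨e⟩ => ?_, fun ⟨e⟩ => hB.nonempty_equiv_quotient_orthogonal hs hC hCnd e
    (isSimpleModule_iff_isCoatom.1 this).1⟩
  obtain ⟨p, hp, hpB⟩ := hB.exists_injective_adjoint hnd hC hCnd
    (p := e.toLinearMap ∘ₗ (hB.orthogonal T).mkQ)
    (e.surjective.comp (hB.orthogonal T).mkQ_surjective)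
  have hpT (s : S) : p s ∈ T := by
    rw [← hB.orthogonal_orthogonal hs.isRefl hnd T]
    intro y hy
    rw [← hs.eq (p s) y, hpB]
    have hy0 : (hB.orthogonal T).mkQ y = 0 := (Submodule.Quotient.mk_eq_zero _).2 hy
    rw [LinearMap.comp_apply, hy0, map_zero, map_zero]
  have hinj : Function.Injective (p.codRestrict T hpT) := fun _ _ h => hp (congrArg Subtype.val h)
  have := IsSimpleModule.nontrivial K[G] S
  have hne : p.codRestrict T hpT ≠ 0 := fun h =>
    not_subsingleton S ⟨fun s t => hinj (by rw [h, LinearMap.zero_apply, LinearMap.zero_apply])⟩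
  exact ⟨(LinearEquiv.ofBijective _ (LinearMap.bijective_of_ne_zero hne)).symm⟩

theorem BilinInvariant.simpleMultiplicity_quotient_orthogonal (hB : BilinInvariant G B)
    (hs : B.IsSymm) (hnd : B.Nondegenerate) (hC : BilinInvariant G C) (hCnd : C.Nondegenerate)
    [FiniteDimensional K S] (T : Submodule K[G] M) [IsSimpleModule K[G] T]
    [IsSimpleModule K[G] S] :
    simpleMultiplicity K[G] (M ⧸ hB.orthogonal T) S = simpleMultiplicity K[G] T S := by
  classical
  have := hB.isSimpleModule_quotient_orthogonal hs.isRefl hnd T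
  rw [simpleMultiplicity_of_isSimpleModule, simpleMultiplicity_of_isSimpleModule]
  exact if_congr (hB.nonempty_equiv_quotient_orthogonal_iff hs hnd hC hCnd T) rfl rfl

end Duality

section Metabolic

open Module (finrank)

variable {K M N P : Type*} [Field K] [AddCommGroup M] [Module K M] [AddCommGroup N] [Module K N]
  [AddCommGroup P] [Module K P]

/-- A subspace is Lagrangian for a quadratic form if the form vanishes on it and it has half the
dimension of the whole space. -/
structure IsLagrangian (Q : QuadraticForm K M) (L : Submodule K M) : Prop where
  eq_zero : ∀ x ∈ L, Q x = 0
  two_mul_finrank : 2 * finrank K L = finrank K M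

/-- A quadratic form is metabolic if it has a Lagrangian subspace. -/
def IsMetabolic (Q : QuadraticForm K M) : Prop := ∃ L, IsLagrangian Q L

theorem isMetabolic_of_subsingleton [Subsingleton M] (Q : QuadraticForm K M) : IsMetabolic Q :=
  ⟨⊥, fun x _ => by rw [Subsingleton.elim x 0, map_zero], by
    rw [finrank_bot, Module.finrank_zero_of_subsingleton]⟩

theorem isMetabolic_prod_of_forall_eq_neg [FiniteDimensional K M] {Q Q' : QuadraticForm K M}
    (f : M →ₗ[K] M) (hf : ∀ x, Q' (f x) = -Q x) : IsMetabolic (Q.prod Q') := by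
  refine ⟨(LinearMap.id.prod f).range, ?_, ?_⟩
  · rintro _ ⟨x, rfl⟩
    simp [hf]
  · rw [LinearMap.finrank_range_of_inj fun x y hxy => congrArg Prod.fst hxy, Module.finrank_prod,
      two_mul]

theorem IsMetabolic.prod [FiniteDimensional K M] [FiniteDimensional K N]
    {Q : QuadraticForm K M} {Q' : QuadraticForm K N} (hQ : IsMetabolic Q) (hQ' : IsMetabolic Q') :
    IsMetabolic (Q.prod Q') := by
  obtain ⟨L, hL, hLr⟩ := hQ
  obtain ⟨L', hL', hLr'⟩ := hQ'
  refine ⟨(L.subtype.prodMap L'.subtype).range, ?_, ?_⟩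
  · rintro _ ⟨x, rfl⟩
    simp [hL, hL']
  · rw [LinearMap.finrank_range_of_inj (L.injective_subtype.prodMap L'.injective_subtype),
      Module.finrank_prod, Module.finrank_prod, ← hLr, ← hLr', mul_add]

theorem IsMetabolic.of_isometryEquiv {Q : QuadraticForm K M} {Q' : QuadraticForm K N}
    (hQ : IsMetabolic Q) (e : Q.IsometryEquiv Q') : IsMetabolic Q' := by
  obtain ⟨L, hL, hLr⟩ := hQ
  refine ⟨L.map e.toLinearEquiv.toLinearMap, ?_, ?_⟩
  · rintro _ ⟨x, hx, rfl⟩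
    exact (e.map_app x).trans (hL x hx)
  · rw [LinearEquiv.finrank_map_eq, hLr, e.toLinearEquiv.finrank_eq]

theorem IsMetabolic.of_isCompl [FiniteDimensional K M] {Q : QuadraticForm K M}
    {A B : Submodule K M} (h : IsCompl A B) (hAB : ∀ x ∈ A, ∀ y ∈ B, polar Q x y = 0)
    (hA : IsMetabolic (Q.comp A.subtype)) (hB : IsMetabolic (Q.comp B.subtype)) :
    IsMetabolic Q :=
  (hA.prod hB).of_isometryEquiv ⟨A.prodEquivOfIsCompl B h, fun x => by
    simp [QuadraticMap.map_add Q, hAB x.1 x.1.2 x.2 x.2.2]⟩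

theorem finrank_comap_of_surjective [FiniteDimensional K M] {g : M →ₗ[K] N}
    (hg : Function.Surjective g) (L : Submodule K N) :
    finrank K (L.comap g) = finrank K L + finrank K g.ker := by
  have h := (g.domRestrict (L.comap g)).finrank_range_add_finrank_ker
  have hker : g.ker ≤ L.comap g := fun x hx => by
    rw [Submodule.mem_comap, LinearMap.mem_ker.1 hx]
    exact L.zero_mem
  rwa [LinearMap.range_domRestrict, Submodule.map_comap_eq_of_surjective hg,
    LinearMap.ker_domRestrict, (Submodule.comapSubtypeEquivOfLe hker).finrank_eq, eq_comm] at h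

theorem IsMetabolic.of_injective_of_surjective [FiniteDimensional K P] {Q : QuadraticForm K M}
    {Q' : QuadraticForm K N} (hQ' : IsMetabolic Q') {f : P →ₗ[K] M} (hf : Function.Injective f)
    {g : P →ₗ[K] N} (hg : Function.Surjective g) (hgQ : ∀ x, Q' (g x) = Q (f x))
    (hr : finrank K N + 2 * finrank K g.ker = finrank K M) : IsMetabolic Q := by
  obtain ⟨L, hL, hLr⟩ := hQ'
  refine ⟨(L.comap g).map f, ?_, ?_⟩
  · rintro _ ⟨x, hx, rfl⟩
    exact (hgQ x).symm.trans (hL _ hx)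
  · rw [← ((L.comap g).equivMapOfInjective f hf).finrank_eq, finrank_comap_of_surjective hg]
    omega

end Metabolic

section PairedFactors

open Module (finrank)

universe u v w

variable (K : Type u) (G : Type v) [Field K] [Group G]

/-- Any two nondegenerate invariant quadratic forms `q₁`, `q₂` on `S` have a metabolic orthogonal
sum, the witness being an anti-isometry, and an invariant quadratic form on `S` is determined by
its polar form. -/
structure PairwiseMetabolic (S : Type*) [AddCommGroup S] [Module K S] [Module K[G] S] : Prop where
  eq_zero_of_polarBilin_eq_zero (q : QuadraticForm K S) :
    QuadInvariant G q → polarBilin q = 0 → q = 0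
  exists_eq_neg (q₁ q₂ : QuadraticForm K S) : QuadInvariant G q₁ → QuadInvariant G q₂ →
    (polarBilin q₁).Nondegenerate → (polarBilin q₂).Nondegenerate →
    ∃ f : S →ₗ[K] S, ∀ x, q₂ (f x) = -q₁ x

/-- The hypothesis on the composition factors of `M` under which its invariant forms are metabolic:
they are pairwise metabolic, and the self-dual ones have even multiplicity. -/
structure HasPairedFactors (M : Type w) [AddCommGroup M] [Module K M] [Module K[G] M] : Prop where
  pairwiseMetabolic (S : Type w) [AddCommGroup S] [Module K S] [Module K[G] S]
    [IsScalarTower K K[G] S] [FiniteDimensional K S] [IsSimpleModule K[G] S] :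
    simpleMultiplicity K[G] M S ≠ 0 → PairwiseMetabolic K G S
  even (S : Type w) [AddCommGroup S] [Module K S] [Module K[G] S]
    [IsScalarTower K K[G] S] [FiniteDimensional K S] [IsSimpleModule K[G] S]
    (C : LinearMap.BilinForm K S) : BilinInvariant G C → C.Nondegenerate →
    Even (simpleMultiplicity K[G] M S)

variable {K G} {M : Type w} [AddCommGroup M] [Module K M] [Module K[G] M]
  [IsScalarTower K K[G] M] [FiniteDimensional K M] {Q : QuadraticForm K M}

theorem HasPairedFactors.pairwiseMetabolic_submodule (h : HasPairedFactors K G M)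
    (T : Submodule K[G] M) [IsSimpleModule K[G] T] : PairwiseMetabolic K G T :=
  h.pairwiseMetabolic T
    (simpleMultiplicity_ne_zero_of_surjective T T LinearMap.id Function.surjective_id)

theorem HasPairedFactors.subquotient_orthogonal (h : HasPairedFactors K G M)
    (hQ : QuadInvariant G Q) (hnd : (polarBilin Q).Nondegenerate) {T : Submodule K[G] M}
    [IsSimpleModule K[G] T] (hT : T ≤ hQ.polarBilin.orthogonal T) :
    HasPairedFactors K G (Subquotient T (hQ.polarBilin.orthogonal T)) where
  pairwiseMetabolic S _ _ _ _ _ _ hS := h.pairwiseMetabolic S <| by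
    rw [simpleMultiplicity_eq_add_subquotient (K := K) S hT]
    omega
  even S _ _ _ _ _ _ C hC hCnd := by
    have heven := h.even S C hC hCnd
    rw [simpleMultiplicity_eq_add_subquotient (K := K) S hT,
      hQ.polarBilin.simpleMultiplicity_quotient_orthogonal (isSymm_polarBilin Q) hnd hC hCnd,
      add_right_comm] at heven
    exact (Nat.even_add.1 heven).1 ⟨_, rfl⟩

theorem HasPairedFactors.of_isCompl (h : HasPairedFactors K G M) {W P : Submodule K[G] M}
    (hWP : IsCompl W P) {T : Type*} [AddCommGroup T] [Module K T] [Module K[G] T]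
    [IsScalarTower K K[G] T] [FiniteDimensional K T] (e : (T × T) ≃ₗ[K[G]] W) :
    HasPairedFactors K G P where
  pairwiseMetabolic S _ _ _ _ _ _ hS := h.pairwiseMetabolic S <| by
    rw [simpleMultiplicity_eq_add_of_isCompl S hWP]
    omega
  even S _ _ _ _ _ _ C hC hCnd := by
    have heven := h.even S C hC hCnd
    rw [simpleMultiplicity_eq_add_of_isCompl S hWP, ← simpleMultiplicity_congr S e,
      simpleMultiplicity_prod] at heven
    exact (Nat.even_add.1 heven).1 ⟨_, rfl⟩

theorem isMetabolic_of_le_orthogonal (hQ : QuadInvariant G Q)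
    (hnd : (polarBilin Q).Nondegenerate) {T : Submodule K[G] M}
    (hT : ∀ x ∈ T, Q x = 0)
    (ih : ∀ Q' : QuadraticForm K (Subquotient T (hQ.polarBilin.orthogonal T)),
      QuadInvariant G Q' → (polarBilin Q').Nondegenerate → IsMetabolic Q') : IsMetabolic Q := by
  obtain ⟨Q', hQ', hinv, hnd'⟩ := exists_form_orthogonal_quotient hQ hnd hT
  have hle := le_orthogonal_of_forall_eq_zero hQ hT
  let P := hQ.polarBilin.orthogonal T
  have hker : finrank K ((T.comap P.subtype).mkQ.restrictScalars K).ker = finrank K T := by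
    rw [LinearMap.ker_restrictScalars, Submodule.ker_mkQ]
    exact ((Submodule.comapSubtypeEquivOfLe hle).restrictScalars K).finrank_eq
  refine (ih Q' hinv hnd').of_injective_of_surjective (f := P.subtype.restrictScalars K)
    P.injective_subtype (g := (T.comap P.subtype).mkQ.restrictScalars K)
    (T.comap P.subtype).mkQ_surjective hQ' ?_
  rw [hker, finrank_subquotient_orthogonal hQ hnd hle]

section Embedding

variable {S : Type*} [AddCommGroup S] [Module K S] [Module K[G] S] [IsScalarTower K K[G] S]

theorem exists_injective_of_simpleMultiplicity_ne_zero (hQ : QuadInvariant G Q)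
    (hdisj : ∀ A, Disjoint A (hQ.polarBilin.orthogonal A)) {C : LinearMap.BilinForm K S}
    (hC : BilinInvariant G C) (hCnd : C.Nondegenerate) {P : Submodule K[G] M}
    (hP : simpleMultiplicity K[G] P S ≠ 0) :
    ∃ j : S →ₗ[K[G]] M, Function.Injective j ∧ ∀ s, j s ∈ P := by
  obtain ⟨B, p, hp⟩ := exists_surjective_of_simpleMultiplicity_ne_zero S hP
  let e := Submodule.equivMapOfInjective P.subtype P.injective_subtype B
  obtain ⟨p', hp', -⟩ := (hQ.comp (B.map P.subtype).subtype).polarBilin.exists_injective_adjoint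
    (nondegenerate_restrictForm hQ (hdisj _)) hC hCnd (p := p ∘ₗ e.symm.toLinearMap)
    (hp.comp e.symm.surjective)
  exact ⟨(B.map P.subtype).subtype ∘ₗ p', Subtype.val_injective.comp hp', fun s =>
    P.map_subtype_le B (p' s).2⟩

end Embedding

theorem HasPairedFactors.isMetabolic_restrictForm_range_coprod (h : HasPairedFactors K G M)
    (hQ : QuadInvariant G Q) (hdisj : ∀ A, Disjoint A (hQ.polarBilin.orthogonal A))
    {T : Submodule K[G] M} [IsSimpleModule K[G] T] {j : T →ₗ[K[G]] M} (hj : Function.Injective j)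
    (hjT : ∀ t, j t ∈ hQ.polarBilin.orthogonal T)
    (hinj : Function.Injective (T.subtype.coprod j)) :
    IsMetabolic (restrictForm Q (T.subtype.coprod j).range) := by
  obtain ⟨f, hf⟩ := (h.pairwiseMetabolic_submodule T).exists_eq_neg _ _ (hQ.comp T.subtype)
    (hQ.comp j) (nondegenerate_restrictForm hQ (hdisj T))
    (nondegenerate_comp_of_injective hQ hj (hdisj _))
  refine (isMetabolic_prod_of_forall_eq_neg f hf).of_isometryEquiv
    ⟨(LinearEquiv.ofInjective _ hinj).restrictScalars K, fun x => ?_⟩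
  have hx : polar Q x.1 (j x.2) = 0 := hjT x.2 x.1 x.1.2
  simpa [hx] using QuadraticMap.map_add Q x.1 (j x.2)

theorem HasPairedFactors.exists_isMetabolic_restrictForm [Nontrivial M]
    (h : HasPairedFactors K G M) (hQ : QuadInvariant G Q)
    (hdisj : ∀ A, Disjoint A (hQ.polarBilin.orthogonal A)) :
    ∃ W : Submodule K[G] M, W ≠ ⊥ ∧ IsMetabolic (restrictForm Q W) ∧
      HasPairedFactors K G (hQ.polarBilin.orthogonal W) := by
  have hrefl := (isSymm_polarBilin Q).isRefl
  obtain ⟨T, -, hT⟩ := exists_isSimpleModule_le (K := K) (top_ne_bot (α := Submodule K[G] M))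
  have hTnd := nondegenerate_restrictForm hQ (hdisj T)
  have hmult : simpleMultiplicity K[G] (hQ.polarBilin.orthogonal T) T ≠ 0 := fun h0 => by
    have heven := h.even T _ (hQ.comp T.subtype).polarBilin hTnd
    rw [simpleMultiplicity_eq_add_of_isCompl T (hQ.polarBilin.isCompl_orthogonal hrefl (hdisj T)),
      h0, simpleMultiplicity_of_isSimpleModule, if_pos ⟨LinearEquiv.refl _ _⟩] at heven
    exact Nat.not_even_one heven
  obtain ⟨j, hj, hjT⟩ := exists_injective_of_simpleMultiplicity_ne_zero hQ hdisj
    (hQ.comp T.subtype).polarBilin hTnd hmult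
  have hinj : Function.Injective (T.subtype.coprod j) := by
    have hrange : Disjoint T.subtype.range j.range :=
      (hdisj T).mono T.range_subtype.le (by rintro _ ⟨t, rfl⟩; exact hjT t)
    rw [← LinearMap.ker_eq_bot, LinearMap.ker_coprod_of_disjoint_range _ _ hrange, T.ker_subtype,
      LinearMap.ker_eq_bot.2 hj, Submodule.prod_bot]
  refine ⟨_, ?_, h.isMetabolic_restrictForm_range_coprod hQ hdisj hj hjT hinj, h.of_isCompl
    (hQ.polarBilin.isCompl_orthogonal hrefl (hdisj _)) (LinearEquiv.ofInjective _ hinj)⟩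
  have hTW : T ≤ (T.subtype.coprod j).range := fun x hx => ⟨(⟨x, hx⟩, 0), by simp⟩
  exact fun hW => (isSimpleModule_iff_isAtom.1 hT).1 (le_bot_iff.1 (hW ▸ hTW))

theorem BilinInvariant.disjoint_orthogonal_of_forall_not_le {B : LinearMap.BilinForm K M}
    (hB : BilinInvariant G B)
    (h : ∀ T : Submodule K[G] M, IsSimpleModule K[G] T → ¬ T ≤ hB.orthogonal T)
    (A : Submodule K[G] M) : Disjoint A (hB.orthogonal A) := by
  rw [disjoint_iff]
  by_contra hA
  obtain ⟨T, hle, hT⟩ := exists_isSimpleModule_le (K := K) hA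
  exact h T hT (hle.trans (inf_le_right.trans (hB.orthogonal_anti (hle.trans inf_le_left))))

theorem HasPairedFactors.isMetabolic (h : HasPairedFactors K G M) (hQ : QuadInvariant G Q)
    (hnd : (polarBilin Q).Nondegenerate) : IsMetabolic Q := by
  obtain ⟨n, hn⟩ : ∃ n, finrank K M = n := ⟨_, rfl⟩
  induction n using Nat.strong_induction_on generalizing M with
  | _ n ih => ?_
  cases subsingleton_or_nontrivial M
  · exact isMetabolic_of_subsingleton Q
  by_cases hsing : ∃ T : Submodule K[G] M, IsSimpleModule K[G] T ∧ T ≤ hQ.polarBilin.orthogonal T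
  · obtain ⟨T, hT, hle⟩ := hsing
    have hzero := (h.pairwiseMetabolic_submodule T).eq_zero_of_polarBilin_eq_zero _
      (hQ.comp T.subtype) (LinearMap.ext₂ fun x y => hle y.2 x x.2)
    have hpos := IsSimpleModule.nontrivial K[G] T
    refine isMetabolic_of_le_orthogonal hQ hnd (fun x hx => DFunLike.congr_fun hzero ⟨x, hx⟩)
      fun Q' hQ' hnd' => ih _ ?_ (h.subquotient_orthogonal hQ hnd hle) hQ' hnd' rfl
    have := finrank_subquotient_orthogonal hQ hnd hle
    have := Module.finrank_pos (R := K) (M := T)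
    omega
  have hdisj (A : Submodule K[G] M) := hQ.polarBilin.disjoint_orthogonal_of_forall_not_le
    (fun T hT hle => hsing ⟨T, hT, hle⟩) A
  obtain ⟨W, hW, hmet, hpair⟩ := h.exists_isMetabolic_restrictForm hQ hdisj
  have := Submodule.nontrivial_iff_ne_bot.2 hW
  have hlt : finrank K (hQ.polarBilin.orthogonal W) < n := by
    have := hQ.polarBilin.finrank_add_finrank_orthogonal hnd W
    have := Module.finrank_pos (R := K) (M := W)
    omega
  have hWP := hQ.polarBilin.isCompl_orthogonal (isSymm_polarBilin Q).isRefl (hdisj W)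
  have hmet' : IsMetabolic (restrictForm Q (hQ.polarBilin.orthogonal W)) :=
    ih _ hlt hpair (hQ.comp (hQ.polarBilin.orthogonal W).subtype)
      (nondegenerate_restrictForm_orthogonal hQ hnd (hdisj W)) rfl
  exact IsMetabolic.of_isCompl ((Submodule.isCompl_restrictScalars_iff K).2 hWP)
    (fun x hx y hy => hy x hx) hmet hmet'

end PairedFactors
section Neighbor

open Module (finrank)

variable {K M : Type*} [Field K] [AddCommGroup M] [Module K M]

theorem IsLagrangian.polar_eq_zero {Q : QuadraticForm K M} {L : Submodule K M}
    (hL : IsLagrangian Q L) {x y : M} (hx : x ∈ L) (hy : y ∈ L) : polar Q x y = 0 := by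
  rw [polar, hL.eq_zero x hx, hL.eq_zero y hy, hL.eq_zero _ (L.add_mem hx hy), sub_zero, sub_zero]

/-- Kneser's neighbor of a subspace `L` at a vector `u`: the hyperplane of `L` orthogonal to `u`,
together with `u`. -/
def neighbor (Q : QuadraticForm K M) (L : Submodule K M) (u : M) : Submodule K M :=
  L ⊓ (polarBilin Q u).ker ⊔ Submodule.span K {u}

theorem mem_neighbor {Q : QuadraticForm K M} {L : Submodule K M} {u x : M} :
    x ∈ neighbor Q L u ↔ ∃ y ∈ L, polar Q u y = 0 ∧ ∃ t : K, y + t • u = x := by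
  simp [neighbor, Submodule.mem_sup, Submodule.mem_span_singleton, and_assoc]

theorem IsLagrangian.mem_of_mem_neighbor {Q : QuadraticForm K M} {L : Submodule K M}
    (hL : IsLagrangian Q L) {u b x : M} (hb : b ∈ L) (hub : polar Q b u ≠ 0)
    (hx : x ∈ neighbor Q L u) (hbx : polar Q b x = 0) : x ∈ L ∧ polar Q u x = 0 := by
  obtain ⟨y, hy, huy, t, rfl⟩ := mem_neighbor.1 hx
  have ht : t = 0 := by
    simpa [polar_add_right, polar_smul_right, hL.polar_eq_zero hb hy, hub] using hbx
  simpa [ht] using ⟨hy, huy⟩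

theorem finrank_inf_ker_add_one [FiniteDimensional K M] {L : Submodule K M} (f : Module.Dual K M)
    {b : M} (hb : b ∈ L) (hf : f b ≠ 0) : finrank K ↥(L ⊓ f.ker) + 1 = finrank K L := by
  have hL : f.domRestrict L ≠ 0 := fun h => hf (LinearMap.congr_fun h ⟨b, hb⟩)
  rw [← Module.Dual.finrank_ker_add_one_of_ne_zero hL, LinearMap.ker_domRestrict,
    ← Submodule.map_comap_subtype, Submodule.finrank_map_subtype_eq]

theorem IsLagrangian.isLagrangian_neighbor [FiniteDimensional K M] {Q : QuadraticForm K M}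
    {L : Submodule K M} (hL : IsLagrangian Q L) {u b : M} (hu : Q u = 0) (hb : b ∈ L)
    (hub : polar Q b u ≠ 0) : IsLagrangian Q (neighbor Q L u) where
  eq_zero x hx := by
    obtain ⟨y, hy, huy, t, rfl⟩ := mem_neighbor.1 hx
    rw [QuadraticMap.map_add Q, QuadraticMap.map_smul, hu, hL.eq_zero y hy, polar_smul_right,
      polar_comm, huy]
    simp
  two_mul_finrank := by
    have huL : u ∉ L ⊓ (polarBilin Q u).ker := fun h => hub (hL.polar_eq_zero hb h.1)
    rw [neighbor, Submodule.finrank_sup_span_singleton huL, ← hL.two_mul_finrank,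
      finrank_inf_ker_add_one (polarBilin Q u) hb (by rwa [polarBilin_apply_apply, polar_comm])]

end Neighbor

section Isometry

open Module (finrank)

variable {K V V' : Type*} [Field K] [AddCommGroup V] [Module K V] [AddCommGroup V'] [Module K V']
  {Q : QuadraticForm K V} {Q' : QuadraticForm K V'}

theorem exists_polar_eq_one_of_nondegenerate (hnd : (polarBilin Q).Nondegenerate) {a : V}
    (ha : a ≠ 0) (hQa : Q a = 0) : ∃ v, polar Q a v = 1 ∧ Q v = 0 := by
  obtain ⟨w, hw⟩ : ∃ w, polar Q a w = 1 := by
    obtain ⟨w, hw⟩ := not_forall.1 fun h => ha (nondegenerate_polarBilin_iff.1 hnd a h)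
    exact ⟨(polar Q a w)⁻¹ • w, by rw [polar_smul_right, smul_eq_mul, inv_mul_cancel₀ hw]⟩
  refine ⟨w + (-Q w) • a, ?_, ?_⟩
  · simp [polar_add_right, polar_smul_right, polar_self, hw, hQa]
  · rw [QuadraticMap.map_add Q, QuadraticMap.map_smul, polar_smul_right, polar_comm, hw, hQa]
    simp

theorem injective_of_forall_apply_eq (hnd : (polarBilin Q).Nondegenerate) (f : V →ₗ[K] V')
    (hf : ∀ x, Q' (f x) = Q x) : Function.Injective f := by
  refine (injective_iff_map_eq_zero f).2 fun x hx =>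
    nondegenerate_polarBilin_iff.1 hnd x fun y => ?_
  rw [polar, ← hf, ← hf, ← hf, map_add, hx, zero_add, map_zero, sub_zero, sub_self]

variable {L : Submodule K (V × V')}

theorem IsLagrangian.apply_fst_eq (hL : IsLagrangian (Q.prod (-Q')) L) {x : V × V'} (hx : x ∈ L) :
    Q x.1 = Q' x.2 := by
  simpa [sub_eq_zero, ← sub_eq_add_neg] using hL.eq_zero x hx

variable [FiniteDimensional K V] [FiniteDimensional K V']

theorem IsLagrangian.finrank_eq (hL : IsLagrangian (Q.prod (-Q')) L)
    (hd : finrank K V = finrank K V') : finrank K L = finrank K V := by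
  have := hL.two_mul_finrank
  rw [Module.finrank_prod] at this
  omega

theorem IsLagrangian.exists_inr_mem (hL : IsLagrangian (Q.prod (-Q')) L)
    (hd : finrank K V = finrank K V') (hnd : (polarBilin Q).Nondegenerate) {a : V} (ha0 : a ≠ 0)
    (ha : (a, (0 : V')) ∈ L) : ∃ a' : V', a' ≠ 0 ∧ ((0 : V), a') ∈ L := by
  by_contra! h
  have hinj : Function.Injective ((LinearMap.fst K V V').domRestrict L) := by
    refine (injective_iff_map_eq_zero _).2 ?_
    rintro ⟨⟨x, y⟩, hxy⟩ (rfl : x = 0)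
    simpa using not_imp_not.1 (h y) hxy
  refine ha0 (nondegenerate_polarBilin_iff.1 hnd a fun x => ?_)
  obtain ⟨y, rfl⟩ :=
    (LinearMap.injective_iff_surjective_of_finrank_eq_finrank (hL.finrank_eq hd)).1 hinj x
  simpa [polar_neg] using hL.polar_eq_zero ha y.2

theorem IsLagrangian.nonempty_isometryEquiv (hL : IsLagrangian (Q.prod (-Q')) L)
    (hd : finrank K V = finrank K V') (hnd' : (polarBilin Q').Nondegenerate)
    (h : ∀ a, (a, (0 : V')) ∈ L → a = 0) : Nonempty (Q.IsometryEquiv Q') := by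
  have hinj : Function.Injective ((LinearMap.snd K V V').domRestrict L) := by
    refine (injective_iff_map_eq_zero _).2 ?_
    rintro ⟨⟨x, y⟩, hxy⟩ (rfl : y = 0)
    simpa using h x hxy
  let e := LinearEquiv.ofInjectiveOfFinrankEq _ hinj ((hL.finrank_eq hd).trans hd)
  let f : V' →ₗ[K] V := LinearMap.fst K V V' ∘ₗ L.subtype ∘ₗ e.symm.toLinearMap
  have hf (y : V') : Q (f y) = Q' y :=
    (hL.apply_fst_eq (e.symm y).2).trans (congrArg Q' (e.apply_symm_apply y))
  let φ := LinearEquiv.ofInjectiveOfFinrankEq f (injective_of_forall_apply_eq hnd' f hf) hd.symm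
  exact ⟨QuadraticMap.IsometryEquiv.symm ⟨φ, hf⟩⟩

theorem IsLagrangian.exists_finrank_lt (hL : IsLagrangian (Q.prod (-Q')) L)
    (hd : finrank K V = finrank K V') (hnd : (polarBilin Q).Nondegenerate)
    (hnd' : (polarBilin Q').Nondegenerate) {a : V} (ha0 : a ≠ 0) (ha : (a, (0 : V')) ∈ L) :
    ∃ L', IsLagrangian (Q.prod (-Q')) L' ∧
      finrank K (L'.comap (LinearMap.inl K V V')) < finrank K (L.comap (LinearMap.inl K V V')) := by
  obtain ⟨a', ha0', ha'⟩ := hL.exists_inr_mem hd hnd ha0 ha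
  obtain ⟨v, hav, hv⟩ := exists_polar_eq_one_of_nondegenerate hnd ha0
    (by simpa using hL.apply_fst_eq ha)
  obtain ⟨v', hav', hv'⟩ := exists_polar_eq_one_of_nondegenerate hnd' ha0'
    (by simpa using (hL.apply_fst_eq ha').symm)
  have hau : polar (Q.prod (-Q')) (a, 0) (v, v') = 1 := by simp [polar_neg, hav]
  have hau' : polar (Q.prod (-Q')) (0, a') (v, v') ≠ 0 := by simp [polar_neg, hav']
  have hmem {x : V} (hx : (x, (0 : V')) ∈ neighbor (Q.prod (-Q')) L (v, v')) : (x, (0 : V')) ∈ L ∧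
      polar (Q.prod (-Q')) (v, v') (x, 0) = 0 :=
    hL.mem_of_mem_neighbor ha' hau' hx (by simp [polar])
  refine ⟨_, hL.isLagrangian_neighbor (by simp [hv, hv']) ha' hau',
    Submodule.finrank_lt_finrank_of_lt
    (SetLike.lt_iff_le_and_exists.2 ⟨fun x hx => (hmem hx).1, a, ha, fun h => ?_⟩)⟩
  exact one_ne_zero (hau.symm.trans ((polar_comm _ _ _).trans (hmem h).2))

theorem IsMetabolic.nonempty_isometryEquiv (h : IsMetabolic (Q.prod (-Q')))
    (hd : finrank K V = finrank K V') (hnd : (polarBilin Q).Nondegenerate)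
    (hnd' : (polarBilin Q').Nondegenerate) : Nonempty (Q.IsometryEquiv Q') := by
  obtain ⟨L, hL, hmin⟩ := WellFounded.has_min
    (measure fun L : Submodule K (V × V') => finrank K (L.comap (LinearMap.inl K V V'))).wf _ h
  refine IsLagrangian.nonempty_isometryEquiv hL hd hnd' fun a ha => by_contra fun ha0 => ?_
  obtain ⟨L', hL', hlt⟩ := IsLagrangian.exists_finrank_lt hL hd hnd hnd' ha0 ha
  exact hmin L' hL' hlt

end Isometry
section EvenDimension

open Module (finrank)

universe u v w

variable (K : Type u) (G : Type v) [Field K] [Group G]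

/-- Every composition factor of `M` which carries a nonzero invariant quadratic form is
even-dimensional. -/
def HasEvenQuadraticFactors (M : Type w) [AddCommGroup M] [Module K[G] M] : Prop :=
  ∀ (S : Type w) [AddCommGroup S] [Module K S] [Module K[G] S] [IsScalarTower K K[G] S]
    [FiniteDimensional K S] [IsSimpleModule K[G] S], simpleMultiplicity K[G] M S ≠ 0 →
      ∀ q : QuadraticForm K S, q ≠ 0 → QuadInvariant G q → Even (finrank K S)

variable {K G} {M : Type w} [AddCommGroup M] [Module K M] [Module K[G] M]
  [IsScalarTower K K[G] M]

theorem HasEvenQuadraticFactors.finrank_ne_one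
    (h : HasEvenQuadraticFactors K G M)
    (htriv : ∀ (g : G) (x : M), MonoidAlgebra.of K G g • x = x) : finrank K M ≠ 1 := fun h1 => by
  have := Module.finite_of_finrank_eq_succ h1
  have : Nontrivial M := Module.nontrivial_of_finrank_eq_succ h1
  have : IsSimpleModule K[G] M :=
    (isSimpleModule_iff ..).2 (is_simple_module_of_finrank_eq_one h1)
  obtain ⟨x, hx⟩ := exists_ne (0 : M)
  obtain ⟨ℓ, hℓ⟩ : ∃ ℓ : Module.Dual K M, ℓ x ≠ 0 := by
    simpa using (Module.forall_dual_apply_eq_zero_iff K x).not.2 hx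
  have heven := h M
    (simpleMultiplicity_ne_zero_of_surjective M (⊤ : Submodule K[G] M)
      Submodule.topEquiv.toLinearMap Submodule.topEquiv.surjective)
    (QuadraticMap.linMulLin ℓ ℓ) (fun h0 => by simpa [hℓ] using DFunLike.congr_fun h0 x)
    (fun g y => by rw [htriv])
  rw [h1] at heven
  exact absurd heven (by decide)

variable [FiniteDimensional K M] {Q : QuadraticForm K M}

theorem HasEvenQuadraticFactors.even_finrank_submodule (h : HasEvenQuadraticFactors K G M)
    (hQ : QuadInvariant G Q) {T : Submodule K[G] M} [IsSimpleModule K[G] T]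
    (hT : Disjoint T (hQ.polarBilin.orthogonal T)) : Even (finrank K T) := by
  have := IsSimpleModule.nontrivial K[G] T
  obtain ⟨x, hx⟩ := exists_ne (0 : T)
  refine h T (simpleMultiplicity_ne_zero_of_surjective T T LinearMap.id Function.surjective_id)
    (restrictForm Q T) (fun h0 => hx ?_) (hQ.comp T.subtype)
  refine nondegenerate_polarBilin_iff.1 (nondegenerate_restrictForm hQ hT) x fun y => ?_
  simp [polar, h0]

theorem HasEvenQuadraticFactors.even_finrank (h : HasEvenQuadraticFactors K G M)
    (h2 : (2 : K) ≠ 0) (hQ : QuadInvariant G Q) (hnd : (polarBilin Q).Nondegenerate) :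
    Even (finrank K M) := by
  obtain ⟨n, hn⟩ : ∃ n, finrank K M = n := ⟨_, rfl⟩
  induction n using Nat.strong_induction_on generalizing M with
  | _ n ih => ?_
  cases subsingleton_or_nontrivial M
  · simp [Module.finrank_zero_of_subsingleton]
  obtain ⟨T, -, hT⟩ := exists_isSimpleModule_le (K := K) (top_ne_bot (α := Submodule K[G] M))
  have := IsSimpleModule.nontrivial K[G] T
  have hpos := Module.finrank_pos (R := K) (M := T)
  rcases disjoint_or_le_orthogonal hQ T with hdisj | hle
  · have hc := hQ.polarBilin.isCompl_orthogonal (isSymm_polarBilin Q).isRefl hdisj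
    have hsum := finrank_add_finrank_of_isCompl (K := K) hc
    rw [← hsum]
    refine (h.even_finrank_submodule hQ hdisj).add (ih _ (by omega) (fun S _ _ _ _ _ _ hS => h S ?_)
      (hQ.comp (hQ.polarBilin.orthogonal T).subtype)
      (nondegenerate_restrictForm_orthogonal hQ hnd hdisj) rfl)
    rw [simpleMultiplicity_eq_add_of_isCompl S hc]
    omega
  · have hzero (x : M) (hx : x ∈ T) : Q x = 0 := by
      simpa [polar_self, h2] using hle hx x hx
    obtain ⟨Q', -, hQ', hnd'⟩ := exists_form_orthogonal_quotient hQ hnd hzero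
    have hsum := finrank_subquotient_orthogonal hQ hnd hle
    rw [← hsum]
    refine (ih _ (by omega) (fun S _ _ _ _ _ _ hS => h S ?_) hQ' hnd' rfl).add (even_two_mul _)
    rw [simpleMultiplicity_eq_add_subquotient (K := K) S hle]
    omega

theorem HasEvenQuadraticFactors.even_finrank_of_simpleMultiplicity_ne_zero
    (h : HasEvenQuadraticFactors K G M) {S : Type*} [AddCommGroup S] [Module K S] [Module K[G] S]
    [IsScalarTower K K[G] S] [FiniteDimensional K S] [IsSimpleModule K[G] S]
    (hS : simpleMultiplicity K[G] M S ≠ 0) {q : QuadraticForm K S} (hq0 : q ≠ 0)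
    (hq : QuadInvariant G q) : Even (finrank K S) := by
  obtain ⟨c, -, -, i, ⟨e⟩⟩ := exists_compositionSeries_of_simpleMultiplicity_ne_zero S hS
  have := IsSimpleModule.congr e
  have : FiniteDimensional K (Subquotient (c i.castSucc) (c i.succ)) :=
    .equiv (e.restrictScalars K).symm
  rw [← (e.restrictScalars K).finrank_eq]
  refine h _ ?_ (q.comp (e.restrictScalars K).toLinearMap) (fun h0 => hq0 ?_)
    (hq.comp e.toLinearMap)
  · exact simpleMultiplicity_ne_zero_of_surjective _ (c i.succ) _ (Submodule.mkQ_surjective _)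
  · ext x
    simpa using DFunLike.congr_fun h0 (e.symm x)

theorem HasEvenQuadraticFactors.of_injective_of_surjective {N P : Type*}
    [AddCommGroup N] [Module K[G] N] [AddCommGroup P] [Module K P] [Module K[G] P]
    (h : HasEvenQuadraticFactors K G M) {f : N →ₗ[K[G]] M} {g : N →ₗ[K[G]] P}
    (hf : Function.Injective f) (hg : Function.Surjective g) : HasEvenQuadraticFactors K G P :=
  fun S _ _ _ _ _ _ hS _ hq0 hq => h.even_finrank_of_simpleMultiplicity_ne_zero
    (fun h0 => hS (Nat.le_zero.1 (h0 ▸ simpleMultiplicity_le_of_injective_of_surjective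
      (S := S) hf hg))) hq0 hq

end EvenDimension

section FiniteFields

open Module (finrank)

theorem exists_sq_add_mul_sq_eq {k : Type*} [Field k] [Finite k] (h2 : (2 : k) ≠ 0) {r : k}
    (hr : r ≠ 0) (a : k) : ∃ p q : k, p ^ 2 + r * q ^ 2 = a := by
  have := Fintype.ofFinite k
  have hchar : ringChar k ≠ 2 := fun h => h2 <| by
    simpa [h] using ringChar.Nat.cast_ringChar (R := k)
  obtain ⟨p, q, hpq⟩ := FiniteField.exists_root_sum_quadratic
    (f := Polynomial.X ^ 2 - Polynomial.C a) (g := Polynomial.C r * Polynomial.X ^ 2)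
    (Polynomial.degree_X_pow_sub_C two_pos a) (Polynomial.degree_C_mul_X_pow 2 hr)
    (FiniteField.odd_card_of_char_ne_two hchar)
  simp only [Polynomial.eval_sub, Polynomial.eval_pow, Polynomial.eval_X, Polynomial.eval_C,
    Polynomial.eval_mul] at hpq
  exact ⟨p, q, by linear_combination hpq⟩

theorem exists_similitude_weightedSumSquares {k : Type*} [Field k] [Finite k] (h2 : (2 : k) ≠ 0)
    {ι : Type*} [Fintype ι] (w : ι ⊕ ι → kˣ) (a : k) :
    ∃ f : (ι ⊕ ι → k) →ₗ[k] (ι ⊕ ι → k),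
      ∀ x, weightedSumSquares k w (f x) = a * weightedSumSquares k w x := by
  choose p q hpq using fun i : ι => exists_sq_add_mul_sq_eq h2
    (div_ne_zero (w (.inr i)).ne_zero (w (.inl i)).ne_zero) a
  refine ⟨LinearMap.pi (Sum.elim
    (fun i => p i • LinearMap.proj (.inl i) -
      ((w (.inr i) : k) / w (.inl i) * q i) • LinearMap.proj (.inr i))
    (fun i => q i • LinearMap.proj (.inl i) + p i • LinearMap.proj (.inr i))), fun x => ?_⟩
  simp only [weightedSumSquares_apply, Fintype.sum_sum_type, ← Finset.sum_add_distrib,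
    Finset.mul_sum]
  refine Finset.sum_congr rfl fun i _ => ?_
  have hw := (w (.inl i)).ne_zero
  rw [← hpq i]
  simp only [LinearMap.pi_apply, Sum.elim_inl, Sum.elim_inr, LinearMap.sub_apply,
    LinearMap.add_apply, LinearMap.smul_apply, LinearMap.proj_apply, smul_eq_mul, Units.smul_def]
  field_simp
  ring

theorem exists_similitude {k W : Type*} [Field k] [Finite k] [AddCommGroup W] [Module k W]
    [FiniteDimensional k W] (h2 : (2 : k) ≠ 0) (heven : Even (finrank k W))
    {b : LinearMap.BilinForm k W} (hb : b.IsSymm) (hnd : b.Nondegenerate) (a : k) :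
    ∃ f : W →ₗ[k] W, ∀ x, b (f x) (f x) = a * b x x := by
  have := invertibleOfNonzero h2
  obtain ⟨m, hm⟩ := heven
  obtain ⟨w, ⟨e⟩⟩ := QuadraticForm.equivalent_weightedSumSquares_units_of_nondegenerate'
    b.toQuadraticMap (by rw [associated_left_inverse k hb.eq]; exact hnd.1)
  let r : (Fin m ⊕ Fin m) ≃ Fin (finrank k W) := finSumFinEquiv.trans (finCongr hm.symm)
  have hr (x) : weightedSumSquares k (w ∘ r) (x ∘ r) = weightedSumSquares k w x := by
    simp only [weightedSumSquares_apply, Function.comp_apply]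
    exact r.sum_comp fun i => w i • (x i * x i)
  obtain ⟨f, hf⟩ := exists_similitude_weightedSumSquares h2 (w ∘ r) a
  let E : W ≃ₗ[k] (Fin m ⊕ Fin m → k) := e.toLinearEquiv.trans (LinearEquiv.funCongrLeft k k r)
  have hE (x : W) : weightedSumSquares k (w ∘ r) (E x) = b x x := (hr _).trans (e.map_app x)
  refine ⟨E.symm ∘ₗ f ∘ₗ E, fun x => ?_⟩
  rw [← hE, ← hE, ← hf]
  simp

theorem eq_of_forall_trace_mul_eq {K k : Type*} [Field K] [Field k] [Algebra K k]
    [FiniteDimensional K k] [Algebra.IsSeparable K k] {s t : k}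
    (h : ∀ c, Algebra.trace K k (c * s) = Algebra.trace K k (c * t)) : s = t := by
  refine sub_eq_zero.1 ((traceForm_nondegenerate K k).2 _ fun c => ?_)
  rw [Algebra.traceForm_apply, mul_sub, map_sub, h, sub_self]

/-- Scharlau's transfer, inverted. -/
theorem exists_trace_mul_eq {K k S : Type*} [Field K] [Field k] [Algebra K k]
    [FiniteDimensional K k] [Algebra.IsSeparable K k] [AddCommGroup S] [Module K S] [Module k S]
    [IsScalarTower K k S] (B : LinearMap.BilinForm K S)
    (hB : ∀ (c : k) x y, B (c • x) y = B x (c • y)) :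
    ∃ b : LinearMap.BilinForm k S, ∀ (c : k) x y, Algebra.trace K k (c * b x y) = B (c • x) y := by
  have hrep (x y : S) : ∃ z : k, ∀ c, Algebra.trace K k (c * z) = B (c • x) y := by
    let l : k →ₗ[K] K := B.flip y ∘ₗ (LinearMap.toSpanSingleton k S x).restrictScalars K
    refine ⟨((Algebra.traceForm K k).toDual (traceForm_nondegenerate K k)).symm l, fun c => ?_⟩
    rw [mul_comm]
    exact LinearMap.BilinForm.apply_toDual_symm_apply (hB := traceForm_nondegenerate K k) l c
  choose b hb using hrep
  refine ⟨LinearMap.mk₂ k b (fun x x' y => ?_) (fun d x y => ?_) (fun x y y' => ?_)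
    (fun d x y => ?_), fun c x y => hb x y c⟩ <;>
    refine eq_of_forall_trace_mul_eq (K := K) fun c => ?_
  · simp only [mul_add, map_add, hb, smul_add, LinearMap.add_apply]
  · rw [hb, smul_eq_mul, ← mul_assoc, hb, mul_smul]
  · simp only [mul_add, map_add, hb]
  · rw [hb, smul_eq_mul, ← mul_assoc, hb, mul_smul, hB c, hB c, hB d, smul_comm]

theorem exists_mul_self_eq_of_two_eq_zero {k : Type*} [Field k] [Finite k] (h2 : (2 : k) = 0)
    (a : k) : ∃ c, c * c = a := by
  have hchar : ringChar k = 2 :=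
    CharP.ringChar_of_prime_eq_zero Nat.prime_two (by exact_mod_cast h2)
  obtain ⟨c, hc⟩ := FiniteField.isSquare_of_char_two hchar a
  exact ⟨c, hc.symm⟩

theorem exists_mul_map_eq_of_map_ne {k : Type*} [Field k] [Finite k] (h2 : (2 : k) ≠ 0)
    {σ : k →+* k} (hσ : Function.Involutive σ) {x : k} (hx : σ x ≠ x) {a : k} (ha : σ a = a) :
    ∃ c, c * σ c = a := by
  let E : Subfield k := RingHom.eqLocusField σ (RingHom.id k)
  have hu : x - σ x ≠ 0 := sub_ne_zero.2 hx.symm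
  have hσu : σ (x - σ x) = -(x - σ x) := by rw [map_sub, hσ, neg_sub]
  have hmem : -(x - σ x) ^ 2 ∈ E := show σ _ = _ by rw [map_neg, map_pow, hσu, neg_sq]; rfl
  obtain ⟨s, t, hst⟩ := exists_sq_add_mul_sq_eq (k := E) (r := ⟨_, hmem⟩)
    (fun h => h2 (congrArg Subtype.val h))
    (fun h => hu (by simpa using congrArg Subtype.val h)) ⟨a, ha⟩
  have hst : (s : k) ^ 2 + -(x - σ x) ^ 2 * (t : k) ^ 2 = a := congrArg Subtype.val hst
  have hs : σ s = s := s.2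
  have ht : σ t = t := t.2
  refine ⟨s + t * (x - σ x), ?_⟩
  rw [map_add, map_mul, hs, ht, hσu]
  linear_combination hst

theorem forall_map_eq_or_exists_mul_map_eq {k : Type*} [Field k] [Finite k] {σ : k →+* k}
    (hσ : Function.Involutive σ) {a : k} (ha : σ a = a) :
    ((2 : k) ≠ 0 ∧ ∀ c, σ c = c) ∨ ∃ c, c * σ c = a := by
  by_cases h2 : (2 : k) = 0
  · obtain ⟨c, hc⟩ := exists_mul_self_eq_of_two_eq_zero h2 a
    have hneg : -c = c := by linear_combination -c * h2
    have hσc : σ c * σ c = c * c := by rw [← map_mul, hc, ha]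
    have hσc : σ c = c := by simpa [hneg] using mul_self_eq_mul_self_iff.1 hσc
    exact .inr ⟨c, by rw [hσc, hc]⟩
  · by_cases hid : ∀ c, σ c = c
    · exact .inl ⟨h2, hid⟩
    · obtain ⟨x, hx⟩ := not_forall.1 hid
      exact .inr (exists_mul_map_eq_of_map_ne h2 hσ hx ha)

end FiniteFields

section EndomorphismField

open MonoidAlgebra (of)
open Module (finrank)

universe u v w

variable {K : Type u} {G : Type v} [Field K] [Group G] {S : Type w} [AddCommGroup S] [Module K S]

section AdjointInvolution

variable {k : Type*} [Field k] [Module k S] {B C : LinearMap.BilinForm K S}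

theorem eq_of_forall_apply_smul_eq [Nontrivial S] (hnd : B.Nondegenerate) {c d : k}
    (h : ∀ x y, B (c • x) y = B (d • x) y) : c = d :=
  eq_of_smul_eq_smul fun x => sub_eq_zero.1 <| hnd.1 _ fun y => by
    rw [map_sub, LinearMap.sub_apply, h, sub_self]

theorem exists_involution_of_exists_adjoint [Nontrivial S] (hs : B.IsSymm)
    (hnd : B.Nondegenerate) (hadj : ∀ c : k, ∃ c' : k, ∀ x y, B (c' • x) y = B x (c • y)) :
    ∃ σ : k →+* k, Function.Involutive σ ∧ ∀ c x y, B (σ c • x) y = B x (c • y) := by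
  choose σ hσ using hadj
  refine ⟨
    { toFun := σ
      map_one' := eq_of_forall_apply_smul_eq hnd fun x y => by rw [hσ, one_smul, one_smul]
      map_mul' := fun c d => eq_of_forall_apply_smul_eq hnd fun x y => by
        rw [hσ, mul_smul, mul_comm, mul_smul, hσ, hσ]
      map_zero' := eq_of_forall_apply_smul_eq hnd fun x y => by
        rw [hσ, zero_smul, zero_smul, map_zero, map_zero, LinearMap.zero_apply]
      map_add' := fun c d => eq_of_forall_apply_smul_eq hnd fun x y => by
        rw [hσ, add_smul, add_smul, map_add, map_add, LinearMap.add_apply, hσ, hσ] },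
    fun c => eq_of_forall_apply_smul_eq hnd fun x y => ?_, hσ⟩
  change B (σ (σ c) • x) y = B (c • x) y
  rw [hσ, hs.eq, hσ, hs.eq]

variable [Module K[G] S] [IsScalarTower K K[G] S] [FiniteDimensional K S]
  [SMulCommClass k K[G] S]

theorem BilinInvariant.exists_apply_smul_eq
    (hk : Function.Surjective (Module.toModuleEnd K[G] (S := k) S)) (hB : BilinInvariant G B)
    (hnd : B.Nondegenerate) (hC : BilinInvariant G C) (c : k) :
    ∃ a : k, ∀ x y, B (a • x) y = C x (c • y) := by
  obtain ⟨p, hp⟩ := hB.exists_adjoint hnd hC (Module.toModuleEnd K[G] S c)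
  obtain ⟨a, rfl⟩ := hk p
  exact ⟨a, hp⟩

end AdjointInvolution

variable [Module K[G] S]

section Transfer

variable {k : Type*} [Field k] [Algebra K k] [FiniteDimensional K k]
  [Algebra.IsSeparable K k] [Module k S] [IsScalarTower K k S] [SMulCommClass k K[G] S]

theorem BilinInvariant.exists_trace_mul_eq {B : LinearMap.BilinForm K S} (hB : BilinInvariant G B)
    (hs : B.IsSymm) (hnd : B.Nondegenerate) (hself : ∀ (c : k) x y, B (c • x) y = B x (c • y)) :
    ∃ b : LinearMap.BilinForm k S, b.IsSymm ∧ b.Nondegenerate ∧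
      (∀ (g : G) x y, b (of K G g • x) (of K G g • y) = b x y) ∧
      ∀ (c : k) x y, Algebra.trace K k (c * b x y) = B (c • x) y := by
  obtain ⟨b, hb⟩ := InvariantForm.exists_trace_mul_eq B hself
  have hbs : b.IsSymm := ⟨fun x y => eq_of_forall_trace_mul_eq (K := K) fun c => by
    rw [hb, hb, hself, hs.eq]⟩
  refine ⟨b, hbs, hbs.isRefl.nondegenerate_iff_separatingLeft.2 fun x hx => hnd.1 x fun y => ?_,
    fun g x y => eq_of_forall_trace_mul_eq (K := K) fun c => ?_, hb⟩
  · rw [← one_smul k x, ← hb, hx, mul_zero, map_zero]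
  · rw [hb, hb, smul_comm, hB]

theorem exists_eq_neg_of_forall_apply_smul_eq [Finite k] [FiniteDimensional k S]
    {q₁ q₂ : QuadraticForm K S} (h2 : (2 : K) ≠ 0) (h₁ : QuadInvariant G q₁)
    (hnd : (polarBilin q₁).Nondegenerate)
    (hself : ∀ (c : k) x y, polarBilin q₁ (c • x) y = polarBilin q₁ x (c • y))
    (heven : ∀ b : LinearMap.BilinForm k S, b.IsSymm → b.Nondegenerate →
      (∀ (g : G) x y, b (of K G g • x) (of K G g • y) = b x y) → Even (finrank k S))
    {a : k} (ha : a ≠ 0) (h₂ : ∀ x y, polarBilin q₁ (a • x) y = polarBilin q₂ x y) :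
    ∃ f : S →ₗ[K] S, ∀ x, q₂ (f x) = -q₁ x := by
  obtain ⟨b, hbs, hbnd, hbinv, hb⟩ :=
    h₁.polarBilin.exists_trace_mul_eq (isSymm_polarBilin q₁) hnd hself
  have h2k : (2 : k) ≠ 0 := by
    rw [← map_ofNat (algebraMap K k)]
    exact (map_ne_zero _).2 h2
  obtain ⟨f, hf⟩ := exists_similitude h2k (heven b hbs hbnd hbinv) hbs hbnd (-a⁻¹)
  refine ⟨f.restrictScalars K, fun x => mul_left_cancel₀ h2 ?_⟩
  have hpolar : polarBilin q₂ (f x) (f x) = -polarBilin q₁ x x := by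
    rw [← h₂, ← hb, hf, neg_mul, mul_neg, mul_inv_cancel_left₀ ha, map_neg, ← one_mul (b x x), hb,
      one_smul]
  simpa [polar_self] using hpolar

end Transfer

variable [IsScalarTower K K[G] S]

theorem eq_neg_of_polarBilin_eq_neg
    (hzero : ∀ q : QuadraticForm K S, QuadInvariant G q → polarBilin q = 0 → q = 0)
    {q₁ q₂ : QuadraticForm K S} (h₁ : QuadInvariant G q₁) (h₂ : QuadInvariant G q₂)
    {f : S →ₗ[K[G]] S} (hf : ∀ x y, polarBilin q₂ (f x) (f y) = -polarBilin q₁ x y) (x : S) :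
    q₂ (f x) = -q₁ x := by
  let q := q₂.comp (f.restrictScalars K) + q₁
  have hq : QuadInvariant G q := fun g x => congrArg₂ (· + ·) (h₂.comp f g x) (h₁ g x)
  have hpolar : polarBilin q = 0 := LinearMap.ext₂ fun x y => by
    have h := hf x y
    simp only [polarBilin_apply_apply, polar, ← map_add] at h
    simp only [q, polarBilin_apply_apply, polar, add_apply, QuadraticMap.comp_apply,
      LinearMap.restrictScalars_apply, LinearMap.zero_apply]
    linear_combination h
  exact eq_neg_of_add_eq_zero_left (congrArg (fun q : QuadraticForm K S => q x) (hzero q hq hpolar))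

variable [FiniteDimensional K S]

variable (K G S) in
/-- Schur's lemma and Wedderburn's little theorem: `k` is the endomorphism ring of `S`. -/
theorem exists_finite_field_toModuleEnd_surjective [Finite K] [IsSimpleModule K[G] S] :
    ∃ (k : Type w) (_ : Field k) (_ : Finite k) (_ : Algebra K k) (_ : Module k S)
      (_ : IsScalarTower K k S) (_ : SMulCommClass k K[G] S),
      Function.Surjective (Module.toModuleEnd K[G] (S := k) S) := by
  classical
  have : Finite S := Module.finite_of_finite K
  have : Finite (Module.End K[G] S) := .of_injective (fun f => (f : S → S)) DFunLike.coe_injective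
  have : SMulCommClass K[G] K S := IsScalarTower.to_smulCommClass'
  exact ⟨Module.End K[G] S, littleWedderburn _, inferInstance,
    Module.End.instAlgebra K K[G] S, Module.End.applyModule, ⟨fun _ _ _ => rfl⟩,
    Module.End.apply_smulCommClass', fun f => ⟨f, rfl⟩⟩

theorem exists_eq_neg_of_isSimpleModule [Finite K] [IsSimpleModule K[G] S]
    (hzero : ∀ q : QuadraticForm K S, QuadInvariant G q → polarBilin q = 0 → q = 0)
    (heven : (2 : K) ≠ 0 → ∀ (k : Type w) [Field k] [Finite k] [Algebra K k] [Module k S]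
      [IsScalarTower K k S] [SMulCommClass k K[G] S] (b : LinearMap.BilinForm k S), b.IsSymm →
      b.Nondegenerate → (∀ (g : G) x y, b (of K G g • x) (of K G g • y) = b x y) →
      Even (finrank k S))
    {q₁ q₂ : QuadraticForm K S} (h₁ : QuadInvariant G q₁) (h₂ : QuadInvariant G q₂)
    (hnd₁ : (polarBilin q₁).Nondegenerate) (hnd₂ : (polarBilin q₂).Nondegenerate) :
    ∃ f : S →ₗ[K] S, ∀ x, q₂ (f x) = -q₁ x := by
  obtain ⟨k, _, _, _, _, _, _, hk⟩ := exists_finite_field_toModuleEnd_surjective K G S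
  have := IsSimpleModule.nontrivial K[G] S
  have hs₁ := isSymm_polarBilin q₁
  have hs₂ := isSymm_polarBilin q₂
  obtain ⟨σ, hσ, hadj⟩ := exists_involution_of_exists_adjoint hs₁ hnd₁
    (h₁.polarBilin.exists_apply_smul_eq hk hnd₁ h₁.polarBilin)
  obtain ⟨a, ha⟩ := h₁.polarBilin.exists_apply_smul_eq hk hnd₁ h₂.polarBilin 1
  simp only [one_smul] at ha
  have ha0 : a ≠ 0 := by
    rintro rfl
    obtain ⟨x, hx⟩ := exists_ne (0 : S)
    exact hx (hnd₂.1 x fun y => by rw [← ha, zero_smul, map_zero, LinearMap.zero_apply])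
  have hσa : σ a = a := eq_of_forall_apply_smul_eq hnd₁ fun x y => by
    rw [hadj, hs₁.eq, ha, ha, hs₂.eq]
  rcases forall_map_eq_or_exists_mul_map_eq hσ (a := -a⁻¹) (by rw [map_neg, map_inv₀, hσa]) with
    ⟨h2, hid⟩ | ⟨c, hc⟩
  · have h2K : (2 : K) ≠ 0 := fun h => h2 (by rw [← map_ofNat (algebraMap K k), h, map_zero])
    have := Module.Finite.of_restrictScalars_finite K k S
    exact exists_eq_neg_of_forall_apply_smul_eq h2K h₁ hnd₁
      (fun c x y => by rw [← hadj, hid]) (heven h2K k) ha0 ha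
  · refine ⟨(Module.toModuleEnd K[G] S c).restrictScalars K,
      eq_neg_of_polarBilin_eq_neg hzero h₁ h₂ fun x y => ?_⟩
    change polarBilin q₂ (c • x) (c • y) = _
    rw [← ha, ← hadj, smul_smul, smul_smul, show σ c * a * c = a * (c * σ c) by ring, hc,
      mul_neg, mul_inv_cancel₀ ha0, neg_one_smul, map_neg, LinearMap.neg_apply]

end EndomorphismField

section ScalarExtension

open MonoidAlgebra (of)
open Module (finrank)
open scoped TensorProduct

section Module

variable {G k V : Type*} [Group G] [CommRing k] [AddCommGroup V] [Module k V]

/-- The `k[G]`-module structure given by a representation, on the space itself rather than on the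
type synonym `Representation.asModule`. -/
noncomputable abbrev representationModule (ρ : Representation k G V) : Module k[G] V :=
  Module.compHom V ρ.asAlgebraHom.toRingHom

theorem isScalarTower_representationModule (ρ : Representation k G V) :
    letI := representationModule ρ
    IsScalarTower k k[G] V :=
  letI := representationModule ρ
  ⟨fun a r x => by
    change ρ.asAlgebraHom (a • r) x = a • ρ.asAlgebraHom r x
    rw [map_smul, LinearMap.smul_apply]⟩

theorem of_smul_representationModule (ρ : Representation k G V) (g : G) (x : V) :
    letI := representationModule ρ
    of k G g • x = ρ g x :=
  LinearMap.congr_fun (ρ.asAlgebraHom_of g) x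

variable [Module k[G] V] [IsScalarTower k k[G] V] {L : Type*} [CommRing L] [Algebra k L]

variable (G V L) in
/-- The extension of scalars of the representation afforded by a `k[G]`-module. -/
noncomputable def baseChangeRepresentation : Representation L G (L ⊗[k] V) :=
  (Module.End.baseChangeHom k L V : Module.End k V →* Module.End L (L ⊗[k] V)).comp
    ((Algebra.lsmul k (A := k[G]) k V : k[G] →* Module.End k V).comp (of k G))

noncomputable instance baseChangeModule : Module L[G] (L ⊗[k] V) :=
  representationModule (baseChangeRepresentation G V L)

instance isScalarTower_baseChangeModule : IsScalarTower L L[G] (L ⊗[k] V) :=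
  isScalarTower_representationModule _

theorem of_smul_tmul (g : G) (a : L) (x : V) :
    of L G g • (a ⊗ₜ[k] x) = a ⊗ₜ[k] (of k G g • x) :=
  of_smul_representationModule (baseChangeRepresentation G V L) g _

theorem baseChange_eq_of_smul {f : V →ₗ[k] V} {g : G} (hf : ∀ x, f x = of k G g • x)
    (x : L ⊗[k] V) : f.baseChange L x = of L G g • x := by
  induction x using TensorProduct.induction_on with
  | zero => rw [smul_zero, map_zero]
  | tmul a x => rw [of_smul_tmul, LinearMap.baseChange_tmul, hf]
  | add x y hx hy => rw [smul_add, map_add, hx, hy]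

end Module

section Map

variable {G L K k V W : Type*} [Group G] [CommRing L]
  [CommRing K] [Algebra K L] [AddCommGroup V] [Module K V] [Module K[G] V] [IsScalarTower K K[G] V]

/-- An `L`-linear map out of a scalar extension which is equivariant on pure tensors. -/
noncomputable def equivariantOfTmul [AddCommGroup W] [Module L W] [Module L[G] W]
    [IsScalarTower L L[G] W] (f : L ⊗[K] V →ₗ[L] W)
    (h : ∀ (g : G) a x, f (a ⊗ₜ (of K G g • x)) = of L G g • f (a ⊗ₜ x)) :
    L ⊗[K] V →ₗ[L[G]] W :=
  MonoidAlgebra.equivariantOfLinearOfComm f fun g x => by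
    induction x using TensorProduct.induction_on with
    | zero => simp only [smul_zero, map_zero]
    | tmul a x => exact (congrArg f (of_smul_tmul g a x)).trans (h g a x)
    | add x y hx hy => rw [smul_add, map_add, hx, hy, map_add, smul_add]

variable (L) in
/-- The extension of scalars of an equivariant map. -/
noncomputable def baseChangeMap [AddCommGroup W] [Module K W] [Module K[G] W]
    [IsScalarTower K K[G] W] (f : V →ₗ[K[G]] W) : L ⊗[K] V →ₗ[L[G]] L ⊗[K] W :=
  equivariantOfTmul ((f.restrictScalars K).baseChange L) fun g a x => by
    simp only [LinearMap.baseChange_tmul, LinearMap.restrictScalars_apply, map_smul, of_smul_tmul]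

variable (L) in
/-- The quotient map `L ⊗[K] V → L ⊗[k] V` for a tower `K → k → L`. -/
noncomputable def mapOfTower [CommRing k] [Algebra K k] [Algebra k L] [IsScalarTower K k L]
    [Module k V] [IsScalarTower K k V] [Module k[G] V] [IsScalarTower k k[G] V]
    (h : ∀ (g : G) (x : V), of K G g • x = of k G g • x) : L ⊗[K] V →ₗ[L[G]] L ⊗[k] V :=
  equivariantOfTmul (TensorProduct.mapOfCompatibleSMul k K L L V) fun g a x => by
    simp only [TensorProduct.mapOfCompatibleSMul_tmul, of_smul_tmul, h]

end Map

section Factors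

variable {K G L V S : Type*} [Field K] [Group G] [Field L] [Algebra K L]
  [AddCommGroup V] [Module K V] [Module K[G] V]
  [IsScalarTower K K[G] V] [FiniteDimensional K V]
  [AddCommGroup S] [Module K S] [Module K[G] S] [IsScalarTower K K[G] S]

theorem HasEvenQuadraticFactors.baseChange_of_simpleMultiplicity_ne_zero
    (h : HasEvenQuadraticFactors L G (L ⊗[K] V)) (hS : simpleMultiplicity K[G] V S ≠ 0) :
    HasEvenQuadraticFactors L G (L ⊗[K] S) := by
  obtain ⟨B, p, hp⟩ := exists_surjective_of_simpleMultiplicity_ne_zero S hS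
  exact h.of_injective_of_surjective (f := baseChangeMap L B.subtype) (g := baseChangeMap L p)
    (Module.Flat.lTensor_preserves_injective_linearMap (B.subtype.restrictScalars K)
      B.subtype_injective)
    (LinearMap.lTensor_surjective L (g := p.restrictScalars K) hp)

theorem BilinInvariant.baseChange {b : LinearMap.BilinForm K S} (hb : BilinInvariant G b) :
    BilinInvariant G (LinearMap.BilinForm.baseChange L b) := fun g x y => by
  induction x using TensorProduct.induction_on with
  | zero => simp only [smul_zero, map_zero, LinearMap.zero_apply]
  | add x z hx hz => simp only [smul_add, map_add, LinearMap.add_apply, hx, hz]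
  | tmul a x =>
    induction y using TensorProduct.induction_on with
    | zero => simp only [smul_zero, map_zero]
    | add y z hy hz => simp only [smul_add, map_add, hy, hz]
    | tmul c y => simp only [of_smul_tmul, LinearMap.BilinForm.baseChange_tmul, hb g]

theorem QuadInvariant.injective_of_polar_eq_zero [IsSimpleModule K[G] S] (h2 : (2 : K) = 0)
    {q : QuadraticForm K S} (hq : QuadInvariant G q) (hpol : ∀ x y, polar q x y = 0)
    (h0 : q ≠ 0) : Function.Injective q := by
  have hadd (x y : S) : q (x + y) = q x + q y := by
    rw [QuadraticMap.map_add q, hpol, add_zero]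
  let Z : Submodule K[G] S := MonoidAlgebra.submoduleOfSMulMem
    { carrier := {x | q x = 0}
      zero_mem' := QuadraticMap.map_zero q
      add_mem' := fun {x y} (hx : q x = 0) (hy : q y = 0) => by
        change q (x + y) = 0
        rw [hadd, hx, hy, add_zero]
      smul_mem' := fun c x (hx : q x = 0) => by
        change q (c • x) = 0
        rw [QuadraticMap.map_smul, hx, smul_zero] }
    fun g x (hx : q x = 0) => (hq g x).trans hx
  have hZ : Z = ⊥ := (eq_bot_or_eq_top Z).resolve_right fun h =>
    h0 (QuadraticMap.ext fun x => show x ∈ Z from h ▸ Submodule.mem_top)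
  intro x y hxy
  have hmem : x - y ∈ Z := by
    change q (x - y) = 0
    rw [sub_eq_add_neg, hadd, QuadraticMap.map_neg, hxy, ← two_mul, h2, zero_mul]
  rwa [hZ, Submodule.mem_bot, sub_eq_zero] at hmem

theorem finrank_eq_one_of_injective_quadraticForm [Finite K] [Nontrivial S] (h2 : (2 : K) = 0)
    {q : QuadraticForm K S} (hinj : Function.Injective q) : finrank K S = 1 := by
  obtain ⟨v, hv⟩ := exists_ne (0 : S)
  have hqv : q v ≠ 0 := fun h => hv (hinj (h.trans (QuadraticMap.map_zero q).symm))
  refine (finrank_eq_one_iff_of_nonzero' v hv).2 fun x => ?_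
  obtain ⟨c, hc⟩ := exists_mul_self_eq_of_two_eq_zero h2 (q x / q v)
  exact ⟨c, hinj (by rw [QuadraticMap.map_smul, hc, smul_eq_mul, div_mul_cancel₀ _ hqv])⟩

variable [FiniteDimensional K S]

theorem HasEvenQuadraticFactors.baseChange_of_tower
    {k : Type*} [Field k] [Algebra K k] [Algebra k L] [IsScalarTower K k L]
    [Module k S] [IsScalarTower K k S] [Module k[G] S] [IsScalarTower k k[G] S]
    (h : HasEvenQuadraticFactors L G (L ⊗[K] S))
    (hof : ∀ (g : G) (x : S), of K G g • x = of k G g • x) :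
    HasEvenQuadraticFactors L G (L ⊗[k] S) :=
  h.of_injective_of_surjective (f := LinearMap.id) (g := mapOfTower L hof) Function.injective_id
    (TensorProduct.mapOfCompatibleSMul_surjective k K L L S)

theorem nondegenerate_baseChange {b : LinearMap.BilinForm K S}
    (hnd : b.Nondegenerate) : (LinearMap.BilinForm.baseChange L b).Nondegenerate := by
  let v := Module.finBasis K S
  have h : LinearMap.BilinForm.toMatrix (v.baseChange L) (b.baseChange L) =
      (LinearMap.BilinForm.toMatrix v b).map (algebraMap K L) := by
    ext i j
    simp [LinearMap.BilinForm.toMatrix_apply, Algebra.algebraMap_eq_smul_one]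
  rw [LinearMap.BilinForm.nondegenerate_iff_det_ne_zero (v.baseChange L), h]
  rw [LinearMap.BilinForm.nondegenerate_iff_det_ne_zero v] at hnd
  simpa [← RingHom.mapMatrix_apply, ← RingHom.map_det] using hnd

theorem HasEvenQuadraticFactors.even_finrank_of_bilinForm
    (h : HasEvenQuadraticFactors L G (L ⊗[K] S)) (h2 : (2 : L) ≠ 0)
    {b : LinearMap.BilinForm K S} (hs : b.IsSymm) (hnd : b.Nondegenerate)
    (hb : BilinInvariant G b) : Even (finrank K S) := by
  rw [← Module.finrank_baseChange (R := L)]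
  have hs' (x y : L ⊗[K] S) : b.baseChange L x y = b.baseChange L y x :=
    (LinearMap.BilinForm.IsSymm.baseChange L (LinearMap.BilinForm.isSymm_iff.1 hs)).eq x y
  refine h.even_finrank (Q := LinearMap.BilinMap.toQuadraticMap (b.baseChange L)) h2
    (fun g x => hb.baseChange g x x) ?_
  rw [nondegenerate_polarBilin_iff]
  intro x hx
  refine (nondegenerate_baseChange hnd).1 x fun y => ?_
  have := hx y
  rw [LinearMap.BilinMap.polar_toQuadraticMap, hs' y x, ← two_mul] at this
  simpa [h2] using this

theorem HasEvenQuadraticFactors.eq_zero_of_polarBilin_eq_zero [Finite K] [IsSimpleModule K[G] S]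
    (h : HasEvenQuadraticFactors L G (L ⊗[K] S)) {q : QuadraticForm K S} (hq : QuadInvariant G q)
    (hpol : polarBilin q = 0) : q = 0 := by
  by_cases h2 : (2 : K) = 0
  · by_contra h0
    have hinj := hq.injective_of_polar_eq_zero h2 (fun x y => by
      rw [← polarBilin_apply_apply, hpol, LinearMap.zero_apply, LinearMap.zero_apply]) h0
    have := IsSimpleModule.nontrivial K[G] S
    refine h.finrank_ne_one (fun g x => ?_) (Module.finrank_baseChange.trans
      (finrank_eq_one_of_injective_quadraticForm h2 hinj))
    induction x using TensorProduct.induction_on with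
    | zero => rw [smul_zero]
    | tmul a x => rw [of_smul_tmul, hinj (hq g x)]
    | add x y hx hy => rw [smul_add, hx, hy]
  · ext x
    have hx : polar q x x = 0 := by rw [← polarBilin_apply_apply, hpol]; simp
    simpa [polar_self, h2] using hx

theorem HasEvenQuadraticFactors.even_finrank_of_smulCommClass [IsAlgClosed L]
    (h : HasEvenQuadraticFactors L G (L ⊗[K] S)) (h2 : (2 : K) ≠ 0)
    {k : Type*} [Field k] [Finite k] [Algebra K k] [Module k S] [IsScalarTower K k S]
    [SMulCommClass k K[G] S] {b : LinearMap.BilinForm k S} (hs : b.IsSymm)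
    (hnd : b.Nondegenerate)
    (hb : ∀ (g : G) x y, b (of K G g • x) (of K G g • y) = b x y) : Even (finrank k S) := by
  have : FiniteDimensional K k := .of_finite
  have : FiniteDimensional k S := .of_restrictScalars_finite K k S
  have : SMulCommClass K[G] k S := .symm _ _ _
  let φ : k →ₐ[K] L := IsAlgClosed.lift
  let : Algebra k L := φ.toRingHom.toAlgebra
  have : IsScalarTower K k L := .of_algebraMap_eq fun x => (φ.commutes x).symm
  let ρ : Representation k G S :=
    (Module.toModuleEnd k (S := K[G]) S : K[G] →* Module.End k S).comp (of K G)
  let := representationModule ρ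
  have : IsScalarTower k k[G] S := isScalarTower_representationModule ρ
  have hof (g : G) (x : S) : of K G g • x = of k G g • x :=
    (of_smul_representationModule ρ g x).symm
  have h2L : (2 : L) ≠ 0 := by
    simpa only [map_ofNat] using (map_ne_zero (algebraMap K L)).2 h2
  exact (h.baseChange_of_tower hof).even_finrank_of_bilinForm h2L hs hnd
    fun g x y => by rw [← hof, ← hof, hb]

end Factors

theorem HasEvenQuadraticFactors.pairwiseMetabolic {K G L : Type*} {S : Type*} [Field K]
    [Finite K] [Group G] [Field L] [Algebra K L] [IsAlgClosed L] [AddCommGroup S] [Module K S]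
    [Module K[G] S] [IsScalarTower K K[G] S] [FiniteDimensional K S] [IsSimpleModule K[G] S]
    (h : HasEvenQuadraticFactors L G (L ⊗[K] S)) : PairwiseMetabolic K G S where
  eq_zero_of_polarBilin_eq_zero _ := h.eq_zero_of_polarBilin_eq_zero
  exists_eq_neg _ _ h₁ h₂ := exists_eq_neg_of_isSimpleModule
    (fun _ => h.eq_zero_of_polarBilin_eq_zero)
    (fun h2 _ _ _ _ _ _ _ _ => h.even_finrank_of_smulCommClass h2) h₁ h₂

end ScalarExtension

section IsometryOfFactors

open Module (finrank)
open scoped TensorProduct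

universe w w'

variable {K G L : Type*} {V : Type w} {V' : Type w'} [Field K] [Group G]
  [AddCommGroup V] [Module K V] [Module K[G] V] [AddCommGroup V'] [Module K V'] [Module K[G] V']
  {Q : QuadraticForm K V} {Q' : QuadraticForm K V'}

theorem QuadInvariant.prod_neg (hQ : QuadInvariant G Q) (hQ' : QuadInvariant G Q') :
    QuadInvariant G (Q.prod (-Q')) := fun g x => by
  simp only [QuadraticMap.prod_apply, neg_apply, Prod.smul_fst, Prod.smul_snd, hQ g,
    hQ' g]

theorem nondegenerate_polarBilin_prod_neg (hnd : (polarBilin Q).Nondegenerate)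
    (hnd' : (polarBilin Q').Nondegenerate) : (polarBilin (Q.prod (-Q'))).Nondegenerate := by
  rw [nondegenerate_polarBilin_iff] at *
  intro x hx
  exact Prod.ext (hnd _ fun y => by simpa [polar_neg] using hx (y, 0))
    (hnd' _ fun y => by simpa [polar_neg] using hx (0, y))

variable [Finite K] [Field L] [Algebra K L] [IsAlgClosed L] [IsScalarTower K K[G] V]
  [FiniteDimensional K V] [IsScalarTower K K[G] V'] [FiniteDimensional K V']

theorem hasPairedFactors_prod (heven : HasEvenQuadraticFactors L G (L ⊗[K] V))
    (hmult : ∀ (S : Type (max w w')) [AddCommGroup S] [Module K[G] S],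
      simpleMultiplicity K[G] V S = simpleMultiplicity K[G] V' S) :
    HasPairedFactors K G (V × V') where
  pairwiseMetabolic S _ _ _ _ _ _ hS := by
    have hV : simpleMultiplicity K[G] V S ≠ 0 := fun h => hS <| by
      rw [simpleMultiplicity_prod, ← hmult, h]
    exact (heven.baseChange_of_simpleMultiplicity_ne_zero hV).pairwiseMetabolic
  even S _ _ _ _ _ _ C _ _ := by
    rw [simpleMultiplicity_prod, ← hmult]
    exact ⟨_, rfl⟩

end IsometryOfFactors

end InvariantForm

namespace GSeries

open InvariantForm
open MonoidAlgebra (of)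
open Module (finrank)
open scoped MonoidAlgebra

theorem last_eq_sum_of_succ_eq_add {A : Type*} [AddCommMonoid A] {n : ℕ} (f : Fin (n + 1) → A)
    (d : Fin n → A) (h0 : f 0 = 0) (h : ∀ i : Fin n, f i.succ = f i.castSucc + d i) :
    f (Fin.last n) = ∑ i, d i := by
  induction n with
  | zero => simpa using h0
  | succ n ih =>
    rw [Fin.sum_univ_castSucc, ← ih (fun i => f i.castSucc) (fun i => d i.castSucc) h0
      fun i => by rw [← h, Fin.succ_castSucc]]
    exact h (Fin.last n)

theorem finrank_eq_sum_factor {K G V : Type*} [Field K] [Group G] [AddCommGroup V] [Module K V]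
    [FiniteDimensional K V] {π : G → V →ₗ[K] V} {n : ℕ} (c : GSeries K π n) :
    finrank K V = ∑ i, finrank K (c.factor i) := by
  rw [← last_eq_sum_of_succ_eq_add (fun i => finrank K (c.s i)) _ (by rw [c.bot, finrank_bot])
    fun i => ?_, c.top, finrank_top]
  have hle : c.s i.castSucc ≤ c.s i.succ := c.mono i.castSucc_lt_succ.le
  rw [← (Submodule.comapSubtypeEquivOfLe hle).finrank_eq, add_comm]
  exact (Submodule.finrank_quotient_add_finrank _).symm

variable {K G V V' : Type*} [Field K] [Group G]
  [AddCommGroup V] [Module K V] [Module K[G] V] [IsScalarTower K K[G] V]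
  [AddCommGroup V'] [Module K V'] [Module K[G] V'] [IsScalarTower K K[G] V']
  {π : G → V →ₗ[K] V} {π' : G → V' →ₗ[K] V'} {n : ℕ}

/-- The terms of a series as `K[G]`-submodules. -/
noncomputable def submodule (c : GSeries K π n) (hπ : ∀ g x, π g x = of K G g • x)
    (i : Fin (n + 1)) : Submodule K[G] V :=
  MonoidAlgebra.submoduleOfSMulMem (c.s i) fun g x hx => by
    rw [← hπ]
    exact c.inv i g x hx

/-- The factors of a series, compared with the subquotients of the `K[G]`-module. -/
noncomputable def factorEquivSubquotient (c : GSeries K π n)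
    (hπ : ∀ g x, π g x = of K G g • x) (i : Fin n) :
    c.factor i ≃ₗ[K] Subquotient (c.submodule hπ i.castSucc) (c.submodule hπ i.succ) :=
  Submodule.Quotient.restrictScalarsEquiv K
    ((c.submodule hπ i.castSucc).comap (c.submodule hπ i.succ).subtype)

theorem factorEquivSubquotient_act (c : GSeries K π n) (hπ : ∀ g x, π g x = of K G g • x)
    (i : Fin n) (g : G) (x : c.factor i) :
    c.factorEquivSubquotient hπ i (c.act i g x) =
      of K G g • c.factorEquivSubquotient hπ i x := by
  obtain ⟨x, rfl⟩ := Submodule.Quotient.mk_surjective _ x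
  have hx : (π g).restrict (c.inv i.succ g) x =
      (⟨of K G g • (x : V), hπ g x ▸ c.inv _ g _ x.2⟩ : c.s i.succ) := Subtype.ext (hπ g x)
  exact congrArg (fun y => c.factorEquivSubquotient hπ i (Submodule.Quotient.mk y)) hx

theorem simpleMultiplicity_eq_sum [FiniteDimensional K V] (c : GSeries K π n)
    (hπ : ∀ g x, π g x = of K G g • x) (S : Type*) [AddCommGroup S] [Module K[G] S] :
    simpleMultiplicity K[G] V S = ∑ i : Fin n, simpleMultiplicity K[G]
      (Subquotient (c.submodule hπ i.castSucc) (c.submodule hπ i.succ)) S := by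
  have hbot : c.submodule hπ 0 = ⊥ := SetLike.ext fun x => SetLike.ext_iff.1 c.bot x
  have htop : c.submodule hπ (Fin.last n) = ⊤ := SetLike.ext fun x => SetLike.ext_iff.1 c.top x
  rw [← last_eq_sum_of_succ_eq_add (fun i => simpleMultiplicity K[G] (c.submodule hπ i) S) _
    (by rw [hbot]; exact simpleMultiplicity_of_subsingleton S) fun i => ?_, htop]
  · exact (simpleMultiplicity_congr S Submodule.topEquiv).symm
  · have hle : c.submodule hπ i.castSucc ≤ c.submodule hπ i.succ :=
      c.mono i.castSucc_lt_succ.le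
    rw [simpleMultiplicity_eq_add_quotient S
        ((c.submodule hπ i.castSucc).comap (c.submodule hπ i.succ).subtype),
      simpleMultiplicity_congr S (Submodule.comapSubtypeEquivOfLe hle)]

theorem FactorEquiv.nonempty_linearEquiv {c : GSeries K π n} {c' : GSeries K π' n} {i j : Fin n}
    (h : c.FactorEquiv i c' j) (hπ : ∀ g x, π g x = of K G g • x)
    (hπ' : ∀ g x, π' g x = of K G g • x) :
    Nonempty (Subquotient (c.submodule hπ i.castSucc) (c.submodule hπ i.succ) ≃ₗ[K[G]]
      Subquotient (c'.submodule hπ' j.castSucc) (c'.submodule hπ' j.succ)) := by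
  obtain ⟨e, he⟩ := h
  let f := (c.factorEquivSubquotient hπ i).symm.trans (e.trans (c'.factorEquivSubquotient hπ' j))
  have hf (g : G) x : f (of K G g • x) = of K G g • f x := by
    obtain ⟨y, rfl⟩ := (c.factorEquivSubquotient hπ i).surjective x
    rw [← factorEquivSubquotient_act]
    simp only [f, LinearEquiv.trans_apply, LinearEquiv.symm_apply_apply]
    rw [he, factorEquivSubquotient_act]
  exact ⟨.ofBijective (MonoidAlgebra.equivariantOfLinearOfComm f.toLinearMap hf) f.bijective⟩

theorem simpleMultiplicity_eq_of_factorEquiv [FiniteDimensional K V] [FiniteDimensional K V']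
    {c : GSeries K π n} {c' : GSeries K π' n} {σ : Fin n ≃ Fin n}
    (h : ∀ i, c.FactorEquiv i c' (σ i)) (hπ : ∀ g x, π g x = of K G g • x)
    (hπ' : ∀ g x, π' g x = of K G g • x) (S : Type*) [AddCommGroup S] [Module K[G] S] :
    simpleMultiplicity K[G] V S = simpleMultiplicity K[G] V' S := by
  rw [c.simpleMultiplicity_eq_sum hπ, c'.simpleMultiplicity_eq_sum hπ']
  exact Fintype.sum_equiv σ _ _ fun i =>
    simpleMultiplicity_congr S ((h i).nonempty_linearEquiv hπ hπ').some

theorem finrank_eq_of_factorEquiv {K G V V' : Type*} [Field K] [Group G]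
    [AddCommGroup V] [Module K V] [FiniteDimensional K V]
    [AddCommGroup V'] [Module K V'] [FiniteDimensional K V']
    {π : G → V →ₗ[K] V} {π' : G → V' →ₗ[K] V'} {n : ℕ}
    {c : GSeries K π n} {c' : GSeries K π' n} {σ : Fin n ≃ Fin n}
    (h : ∀ i, c.FactorEquiv i c' (σ i)) : finrank K V = finrank K V' := by
  rw [c.finrank_eq_sum_factor, c'.finrank_eq_sum_factor]
  exact Fintype.sum_equiv σ _ _ fun i => (h i).elim fun e _ => e.finrank_eq

theorem isCompositionSeries_of_isSimpleModule (c : GSeries K π n)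
    (hπ : ∀ g x, π g x = of K G g • x)
    (h : ∀ i : Fin n, IsSimpleModule K[G]
      (Subquotient (c.submodule hπ i.castSucc) (c.submodule hπ i.succ))) :
    c.IsCompositionSeries := fun i => by
  have := h i
  have := IsSimpleModule.nontrivial K[G]
    (Subquotient (c.submodule hπ i.castSucc) (c.submodule hπ i.succ))
  let e := c.factorEquivSubquotient hπ i
  refine ⟨e.toEquiv.nontrivial, fun W hW => ?_⟩
  let N : Submodule K[G] (Subquotient (c.submodule hπ i.castSucc) (c.submodule hπ i.succ)) :=
    MonoidAlgebra.submoduleOfSMulMem (W.map e.toLinearMap) (by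
      rintro g _ ⟨x, hx, rfl⟩
      exact ⟨_, hW g x hx, c.factorEquivSubquotient_act hπ i g x⟩)
  have hN (x : c.factor i) : e x ∈ N ↔ x ∈ W := e.injective.mem_set_image
  refine (eq_bot_or_eq_top N).imp (fun h0 => ?_) (fun h1 => ?_)
  · ext x
    rw [← hN, h0, Submodule.mem_bot, Submodule.mem_bot, e.map_eq_zero_iff]
  · ext x
    rw [← hN, h1]
    exact iff_of_true trivial trivial

/-- A composition series of `K[G]`-submodules, as a series of invariant subspaces. -/
noncomputable def ofCompositionSeries (hπ : ∀ g x, π g x = of K G g • x)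
    (d : CompositionSeries (Submodule K[G] V)) (hbot : d.head = ⊥) (htop : d.last = ⊤) :
    GSeries K π d.length where
  s i := (d i).restrictScalars K
  mono _ _ hij := d.strictMono.monotone hij
  inv i g x hx := hπ g x ▸ (d i).smul_mem _ hx
  bot := congrArg (Submodule.restrictScalars K) hbot
  top := congrArg (Submodule.restrictScalars K) htop

theorem isCompositionSeries_ofCompositionSeries (hπ : ∀ g x, π g x = of K G g • x)
    (d : CompositionSeries (Submodule K[G] V)) (hbot : d.head = ⊥) (htop : d.last = ⊤) :
    (ofCompositionSeries hπ d hbot htop).IsCompositionSeries :=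
  isCompositionSeries_of_isSimpleModule _ hπ fun i =>
    (covBy_iff_quot_is_simple (d.step i).lt.le).1 (d.step i)

theorem hasEvenQuadraticFactors (hπ : ∀ g x, π g x = of K G g • x)
    (heven : ∀ (m : ℕ) (c : GSeries K π m), c.IsCompositionSeries → ∀ i : Fin m,
      (∃ q : QuadraticForm K (c.factor i), q ≠ 0 ∧ ∀ (g : G) (x), q (c.act i g x) = q x) →
        Even (finrank K (c.factor i))) :
    HasEvenQuadraticFactors K G V := fun S _ _ _ _ _ _ hS q hq0 hq => by
  obtain ⟨d, hbot, htop, i, ⟨e⟩⟩ := exists_compositionSeries_of_simpleMultiplicity_ne_zero S hS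
  let c := ofCompositionSeries hπ d hbot htop
  let ε : c.factor i ≃ₗ[K] S := (c.factorEquivSubquotient hπ i).trans (e.restrictScalars K)
  have hε (g : G) (x : c.factor i) : ε (c.act i g x) = of K G g • ε x :=
    (congrArg e (c.factorEquivSubquotient_act hπ i g x)).trans (e.map_smul _ _)
  rw [← ε.finrank_eq]
  refine heven _ c (isCompositionSeries_ofCompositionSeries hπ d hbot htop) i
    ⟨q.comp ε.toLinearMap, fun h0 => hq0 ?_, fun g x => ?_⟩
  · ext x
    simpa using DFunLike.congr_fun h0 (ε.symm x)
  · simp only [QuadraticMap.comp_apply, LinearEquiv.coe_coe, hε, hq g]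

end GSeries

open InvariantForm in
theorem statement3_general {F G V V' L : Type*} [Field F] [Finite F] [Group G]
    [AddCommGroup V] [Module F V] [FiniteDimensional F V]
    [AddCommGroup V'] [Module F V'] [FiniteDimensional F V']
    [Field L] [Algebra F L] [IsAlgClosed L]
    (ρ : Representation F G V) (ρ' : Representation F G V') {n : ℕ}
    {c : GSeries F (fun g => ρ g) n} {c' : GSeries F (fun g => ρ' g) n} {σ : Fin n ≃ Fin n}
    (hsame : ∀ i, c.FactorEquiv i c' (σ i))
    (heven : ∀ (m : ℕ) (c : GSeries L (fun g => (ρ g).baseChange L) m), c.IsCompositionSeries →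
      ∀ i : Fin m, (∃ q : QuadraticForm L (c.factor i), q ≠ 0 ∧
        ∀ (g : G) (x), q (c.act i g x) = q x) → Even (Module.finrank L (c.factor i)))
    {Q : QuadraticForm F V} {Q' : QuadraticForm F V'}
    (hnd : (polarBilin Q).Nondegenerate) (hQ : ∀ (g : G) (x : V), Q (ρ g x) = Q x)
    (hnd' : (polarBilin Q').Nondegenerate) (hQ' : ∀ (g : G) (x : V'), Q' (ρ' g x) = Q' x) :
    Nonempty (Q.IsometryEquiv Q') := by
  let := representationModule ρ
  have := isScalarTower_representationModule ρ
  let := representationModule ρ'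
  have := isScalarTower_representationModule ρ'
  have hρ (g : G) (x : V) := (of_smul_representationModule ρ g x).symm
  have hρ' (g : G) (x : V') := (of_smul_representationModule ρ' g x).symm
  have hfactors := hasPairedFactors_prod (L := L)
    (GSeries.hasEvenQuadraticFactors (fun g => baseChange_eq_of_smul (hρ g)) heven)
    fun S => GSeries.simpleMultiplicity_eq_of_factorEquiv hsame hρ hρ' S
  have hinv : QuadInvariant G Q := fun g x => hρ g x ▸ hQ g x
  have hinv' : QuadInvariant G Q' := fun g x => hρ' g x ▸ hQ' g x
  exact (hfactors.isMetabolic (hinv.prod_neg hinv')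
    (nondegenerate_polarBilin_prod_neg hnd hnd')).nonempty_isometryEquiv
    (GSeries.finrank_eq_of_factorEquiv hsame) hnd hnd'

/-- Let `F` be a finite field, `G` a finite group, and `V, V'`
finite-dimensional `F`-representations of `G` with the same multiset of composition
factors.  Assume every composition factor of `V ⊗ F̄` (`F̄` an algebraic closure of `F`)
admitting a nonzero `G`-invariant quadratic form has even dimension over `F̄`.  Then any
two nondegenerate `G`-invariant quadratic forms `Q` on `V` and `Q'` on `V'` give
isometric quadratic spaces `(V, Q)` and `(V', Q')`. -/
theorem statement3 {F G V V' : Type*} [Field F] [Finite F] [Group G] [Finite G]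
    [AddCommGroup V] [Module F V] [FiniteDimensional F V]
    [AddCommGroup V'] [Module F V'] [FiniteDimensional F V']
    (ρ : Representation F G V) (ρ' : Representation F G V')
    -- `V` and `V'` have the same multiset of composition factors:
    (hsame : ∃ (n : ℕ) (c : GSeries F (fun g => ρ g) n) (c' : GSeries F (fun g => ρ' g) n)
      (σ : Fin n ≃ Fin n), c.IsCompositionSeries ∧ c'.IsCompositionSeries ∧
        ∀ i, GSeries.FactorEquiv c i c' (σ i))
    -- every composition factor of `V ⊗ F̄` with a nonzero invariant quadratic form
    -- has even dimension over `F̄`: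
    (heven : ∀ (m : ℕ)
      (c : GSeries (AlgebraicClosure F)
        (fun g => LinearMap.baseChange (AlgebraicClosure F) (ρ g)) m),
      c.IsCompositionSeries → ∀ i : Fin m,
        (∃ q : QuadraticForm (AlgebraicClosure F) (c.factor i), q ≠ 0 ∧
          ∀ (g : G) (x), q (c.act i g x) = q x) →
        Even (Module.finrank (AlgebraicClosure F) (c.factor i))) :
    ∀ (Q : QuadraticForm F V) (Q' : QuadraticForm F V'),
      (∀ x : V, (∀ y : V, polar (⇑Q) x y = 0) → x = 0) →
      (∀ (g : G) (x : V), Q (ρ g x) = Q x) →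
      (∀ x : V', (∀ y : V', polar (⇑Q') x y = 0) → x = 0) →
      (∀ (g : G) (x : V'), Q' (ρ' g x) = Q' x) →
      ∃ φ : V ≃ₗ[F] V', ∀ x : V, Q' (φ x) = Q x := by
  intro Q Q' hnd hQ hnd' hQ'
  obtain ⟨n, c, c', σ, -, -, hσ⟩ := hsame
  have ⟨e⟩ := statement3_general ρ ρ' hσ heven (InvariantForm.nondegenerate_polarBilin_iff.2 hnd) hQ
    (InvariantForm.nondegenerate_polarBilin_iff.2 hnd') hQ'
  exact ⟨e.toLinearEquiv, e.map_app⟩
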